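/- With the restricted ultrapower setup, if U is a complete ultrafilter on P_𝔛, then 𝔛 ⊆ Cod(N/M), where N = ∏_𝔛 K / U: for every A ∈ 𝔛 there is [f] ∈ N such that for all a ∈ M, N ⊨ a ∈ [f] if and only if a ∈ A. -/

import Mathlib

/-!
Given `B ∈ 𝔛`, the element of `N` coding `B` is the class of `n ↦ c n`, where `c n ∈ M ⊆ K` codes
the initial part `{x ∈ B | x < n}`.

*The codes.* With the coding formula `x ∈ y` based on Gödel's `β`-function, the existence of `c n`
is a Chinese remainder argument carried out inside `M` by arithmetical induction
(`crt_succ`, `SatACA0.code_exists`). Arithmetical comprehension yields a coded choice of least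
witnesses (`SatACA0.choice`), so the functions `c = ⟨α, β⟩`, `α` and `β` are coded in `𝔛`
(`SatACA0.exists_codes`); composing with the coded embedding of `M` into `K₀` puts them
in `∏_𝔛 K`.

*Łoś's theorem.* Only the parts of `x ∈ y` that are equations and inequalities between terms are
transferred between `N` and `K`. For this, `∏_𝔛 K` has to be closed under the operations of `K`,
which holds because the elementary diagram of `K₀` is coded in `𝔛` (`diag_op`,
`SatACA0.coded_op`). The existential quantifiers of `x ∈ y` are treated separately.

*From `a ∈ B` to `N`.* For all `n > a` the condition `a ∈ c n` holds in `M`, and the witnessing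
quotients are given by a coded function of `n` (`SatACA0.exists_quotient`). Completeness of `U`
gives that every final segment of `M` belongs to `U` (`SatACA0.final_mem`), so this function
provides a witness in `N`.

*From `N` to `a ∈ B`.* Witnesses in `N` are functions in `∏_𝔛 K`. As `U` is a filter, there is
`n > a` at which their values witness `a ∈ c n` in `K`. Since `K` satisfies `PA` and `M` is
an initial segment of `K`, these values lie in `M` (`range_of_add`, `memRel_of_initial`), hence
`a ∈ c n` holds in `M`, that is, `a ∈ B`.
-/

namespace Paper

/-! ### Syntax of (second-order) arithmetic.

Terms of the language `L_A = {0, 1, +, ·, <}`, with number variables indexed by `ℕ`.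
Formulas also allow atomic formulas `t ∈ X_k` (membership in a set variable) and
set quantifiers `allS`; first-order formulas are those avoiding both. -/

inductive PTerm where
  | var : ℕ → PTerm
  | zero : PTerm
  | one : PTerm
  | add : PTerm → PTerm → PTerm
  | mul : PTerm → PTerm → PTerm

inductive Fml where
  | eq : PTerm → PTerm → Fml
  | lt : PTerm → PTerm → Fml
  | mem : PTerm → ℕ → Fml
  | not : Fml → Fml
  | imp : Fml → Fml → Fml
  | all : ℕ → Fml → Fml
  | allS : ℕ → Fml → Fml

def Fml.and (φ ψ : Fml) : Fml := .not (.imp φ (.not ψ))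
def Fml.or (φ ψ : Fml) : Fml := .imp (.not φ) ψ
def Fml.iff (φ ψ : Fml) : Fml := (Fml.imp φ ψ).and (Fml.imp ψ φ)
def Fml.ex (x : ℕ) (φ : Fml) : Fml := .not (.all x (.not φ))
def Fml.exS (k : ℕ) (φ : Fml) : Fml := .not (.allS k (.not φ))

/-- A structure for the language `{0, 1, +, ·, <}` on a carrier `M`
(bundled, so that several structures can live on the same carrier). -/
structure AStr (M : Type) where
  zero : M
  one : M
  add : M → M → M
  mul : M → M → M
  lt : M → M → Prop

/-- The standard model of arithmetic. -/
def natStr : AStr ℕ := ⟨0, 1, (· + ·), (· * ·), (· < ·)⟩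

namespace PTerm

def vars : PTerm → Finset ℕ
  | var n => {n}
  | zero => ∅
  | one => ∅
  | add t u => t.vars ∪ u.vars
  | mul t u => t.vars ∪ u.vars

/-- Substitution of a term `r` for the variable `x` (used only with `r` closed or
with `vars r ⊆ {x}`, in which case it is capture-free). -/
def subst (x : ℕ) (r : PTerm) : PTerm → PTerm
  | var n => if n = x then r else var n
  | zero => zero
  | one => one
  | add t u => add (subst x r t) (subst x r u)
  | mul t u => mul (subst x r t) (subst x r u)

def val {M : Type} (S : AStr M) (v : ℕ → M) : PTerm → M
  | var n => v n
  | zero => S.zero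
  | one => S.one
  | add t u => S.add (t.val S v) (u.val S v)
  | mul t u => S.mul (t.val S v) (u.val S v)

end PTerm

namespace Fml

/-- Free number variables. -/
def freeN : Fml → Finset ℕ
  | eq t u => t.vars ∪ u.vars
  | lt t u => t.vars ∪ u.vars
  | mem t _ => t.vars
  | not φ => φ.freeN
  | imp φ ψ => φ.freeN ∪ ψ.freeN
  | all x φ => φ.freeN.erase x
  | allS _ φ => φ.freeN

/-- Substitution of a term `r` for the (free) variable `x`. -/
def substN (x : ℕ) (r : PTerm) : Fml → Fml
  | eq t u => eq (PTerm.subst x r t) (PTerm.subst x r u)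
  | lt t u => lt (PTerm.subst x r t) (PTerm.subst x r u)
  | mem t k => mem (PTerm.subst x r t) k
  | not φ => not (substN x r φ)
  | imp φ ψ => imp (substN x r φ) (substN x r ψ)
  | all y φ => if y = x then all y φ else all y (substN x r φ)
  | allS k φ => allS k (substN x r φ)

/-- First-order formulas: no set variables, no set quantifiers. -/
def IsFO : Fml → Prop
  | eq _ _ => True
  | lt _ _ => True
  | mem _ _ => False
  | not φ => φ.IsFO
  | imp φ ψ => φ.IsFO ∧ ψ.IsFO
  | all _ φ => φ.IsFO
  | allS _ _ => False

/-- Arithmetical formulas: set variables allowed as parameters, but no set quantifiers. -/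
def IsArith : Fml → Prop
  | eq _ _ => True
  | lt _ _ => True
  | mem _ _ => True
  | not φ => φ.IsArith
  | imp φ ψ => φ.IsArith ∧ ψ.IsArith
  | all _ φ => φ.IsArith
  | allS _ _ => False

end Fml

/-! ### Satisfaction -/

/-- Satisfaction for a second-order structure `(M, 𝔛)`: number quantifiers range over `M`,
set quantifiers range over `𝔛`. -/
def Sat {M : Type} (S : AStr M) (𝔛 : Set (Set M)) : (ℕ → M) → (ℕ → Set M) → Fml → Prop
  | v, _, .eq t u => t.val S v = u.val S v
  | v, _, .lt t u => S.lt (t.val S v) (u.val S v)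
  | v, w, .mem t k => t.val S v ∈ w k
  | v, w, .not φ => ¬ Sat S 𝔛 v w φ
  | v, w, .imp φ ψ => Sat S 𝔛 v w φ → Sat S 𝔛 v w ψ
  | v, w, .all x φ => ∀ a : M, Sat S 𝔛 (Function.update v x a) w φ
  | v, w, .allS k φ => ∀ X ∈ 𝔛, Sat S 𝔛 v (Function.update w k X) φ

/-- First-order satisfaction. -/
def SatFO {M : Type} (S : AStr M) (v : ℕ → M) (φ : Fml) : Prop :=
  Sat S Set.univ v (fun _ => ∅) φ

/-- `M ⊨ T` for a first-order theory `T`. -/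
def ModelsT {M : Type} (S : AStr M) (T : Set Fml) : Prop :=
  ∀ φ ∈ T, ∀ v, SatFO S v φ

/-- Semantic consequence (equivalently, by the completeness theorem, provability). -/
def Proves (T : Set Fml) (φ : Fml) : Prop :=
  ∀ (M : Type) (S : AStr M), ModelsT S T → ∀ v, SatFO S v φ

/-- Consistency (equivalently, by the completeness theorem, having a model). -/
def ConsistentT (T : Set Fml) : Prop :=
  ∃ (M : Type) (S : AStr M), ModelsT S T

def IsFOSentence (φ : Fml) : Prop := φ.IsFO ∧ φ.freeN = ∅

/-- Completeness of a theory. -/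
def CompleteT (T : Set Fml) : Prop :=
  ∀ φ, IsFOSentence φ → (Proves T φ ∨ Proves T φ.not)

/-! ### Peano arithmetic -/

def numeral : ℕ → PTerm
  | 0 => .zero
  | n + 1 => .add (numeral n) .one

def univClosure (φ : Fml) : Fml := (φ.freeN.sort (· ≤ ·)).foldr Fml.all φ

/-- The induction axiom for `φ` in the variable `x` (before taking universal closure). -/
def indFml (φ : Fml) (x : ℕ) : Fml :=
  .imp ((φ.substN x .zero).and (.all x (.imp φ (φ.substN x (.add (.var x) .one)))))
    (.all x φ)

/-- The axioms of first-order Peano arithmetic `PA`. -/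
def PAax : Set Fml :=
  {Fml.all 0 (.not (.eq (.add (.var 0) .one) .zero)),
   Fml.all 0 (.all 1 (.imp (.eq (.add (.var 0) .one) (.add (.var 1) .one))
     (.eq (.var 0) (.var 1)))),
   Fml.all 0 (.eq (.add (.var 0) .zero) (.var 0)),
   Fml.all 0 (.all 1 (.eq (.add (.var 0) (.add (.var 1) .one))
     (.add (.add (.var 0) (.var 1)) .one))),
   Fml.all 0 (.eq (.mul (.var 0) .zero) .zero),
   Fml.all 0 (.all 1 (.eq (.mul (.var 0) (.add (.var 1) .one))
     (.add (.mul (.var 0) (.var 1)) (.var 0)))),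
   Fml.all 0 (.all 1 (Fml.iff (.lt (.var 0) (.var 1))
     (Fml.ex 2 (.eq (.add (.var 0) (.add (.var 2) .one)) (.var 1)))))} ∪
  {ψ | ∃ φ x, Fml.IsFO φ ∧ ψ = univClosure (indFml φ x)}

/-! ### Gödel coding -/

/-- The Cantor pairing function (the canonical pairing `⟨·,·⟩`). -/
def cpair (a b : ℕ) : ℕ := (a + b) * (a + b + 1) / 2 + a

def PTerm.code : PTerm → ℕ
  | .var n => cpair 0 n
  | .zero => cpair 1 0
  | .one => cpair 2 0
  | .add t u => cpair 3 (cpair t.code u.code)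
  | .mul t u => cpair 4 (cpair t.code u.code)

def Fml.code : Fml → ℕ
  | .eq t u => cpair 5 (cpair t.code u.code)
  | .lt t u => cpair 6 (cpair t.code u.code)
  | .not φ => cpair 7 φ.code
  | .imp φ ψ => cpair 8 (cpair φ.code ψ.code)
  | .all x φ => cpair 9 (cpair x φ.code)
  | .mem t k => cpair 10 (cpair t.code k)
  | .allS k φ => cpair 11 (cpair k φ.code)

/-- A theory identified with its set of Gödel codes. -/
def theoryCode (T : Set Fml) : Set ℕ := Fml.code '' T

/-! ### The arithmetical hierarchy (syntactic classes) -/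

inductive IsDelta0 : Fml → Prop
  | eq (t u) : IsDelta0 (.eq t u)
  | lt (t u) : IsDelta0 (.lt t u)
  | mem (t k) : IsDelta0 (.mem t k)
  | not {φ} : IsDelta0 φ → IsDelta0 φ.not
  | imp {φ ψ} : IsDelta0 φ → IsDelta0 ψ → IsDelta0 (φ.imp ψ)
  | ball {φ} (x t) : x ∉ PTerm.vars t → IsDelta0 φ →
      IsDelta0 (.all x (.imp (.lt (.var x) t) φ))

def IsSigma01 (φ : Fml) : Prop := ∃ x ψ, IsDelta0 ψ ∧ φ = Fml.ex x ψ

def IsPi01 (φ : Fml) : Prop := ∃ x ψ, IsDelta0 ψ ∧ φ = Fml.all x ψ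

/-! ### Subsystems of second-order arithmetic, semantically -/

/-- The basic axioms (`PA⁻`, a discretely ordered commutative semiring). -/
def PAminusSem {M : Type} (S : AStr M) : Prop :=
  (∀ a b c : M, S.add a (S.add b c) = S.add (S.add a b) c) ∧
  (∀ a b : M, S.add a b = S.add b a) ∧
  (∀ a b c : M, S.mul a (S.mul b c) = S.mul (S.mul a b) c) ∧
  (∀ a b : M, S.mul a b = S.mul b a) ∧
  (∀ a b c : M, S.mul a (S.add b c) = S.add (S.mul a b) (S.mul a c)) ∧
  (∀ a : M, S.add a S.zero = a) ∧
  (∀ a : M, S.mul a S.zero = S.zero) ∧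
  (∀ a : M, S.mul a S.one = a) ∧
  (∀ a b c : M, S.lt a b → S.lt b c → S.lt a c) ∧
  (∀ a : M, ¬ S.lt a a) ∧
  (∀ a b : M, S.lt a b ∨ a = b ∨ S.lt b a) ∧
  (∀ a b c : M, S.lt a b → S.lt (S.add a c) (S.add b c)) ∧
  (∀ a b c : M, S.lt S.zero c → S.lt a b → S.lt (S.mul a c) (S.mul b c)) ∧
  (∀ a b : M, S.lt a b → ∃ c : M, S.add a c = b) ∧
  S.lt S.zero S.one ∧
  (∀ a : M, S.lt S.zero a → a = S.one ∨ S.lt S.one a) ∧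
  (∀ a : M, a = S.zero ∨ S.lt S.zero a)

/-- `(M,𝔛)` satisfies the induction axiom for `φ` in the variable `x`
(with arbitrary number and set parameters). -/
def SatInd {M : Type} (S : AStr M) (𝔛 : Set (Set M)) (φ : Fml) (x : ℕ) : Prop :=
  ∀ (v : ℕ → M) (w : ℕ → Set M), (∀ k, w k ∈ 𝔛) →
    (Sat S 𝔛 (Function.update v x S.zero) w φ ∧
      ∀ a, Sat S 𝔛 (Function.update v x a) w φ →
        Sat S 𝔛 (Function.update v x (S.add a S.one)) w φ) →
    ∀ a, Sat S 𝔛 (Function.update v x a) w φ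

/-- `(M,𝔛) ⊨ RCA₀`: basic axioms, `Σ⁰₁` induction and `Δ⁰₁` comprehension. -/
def SatRCA0 {M : Type} (S : AStr M) (𝔛 : Set (Set M)) : Prop :=
  PAminusSem S ∧
  (∀ φ x, IsSigma01 φ → SatInd S 𝔛 φ x) ∧
  (∀ φ ψ x, IsSigma01 φ → IsPi01 ψ →
    ∀ (v : ℕ → M) (w : ℕ → Set M), (∀ k, w k ∈ 𝔛) →
      (∀ a, Sat S 𝔛 (Function.update v x a) w φ ↔ Sat S 𝔛 (Function.update v x a) w ψ) →
      {a : M | Sat S 𝔛 (Function.update v x a) w φ} ∈ 𝔛)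

/-- `(M,𝔛) ⊨ ACA₀`: basic axioms, the induction axiom and arithmetical comprehension. -/
def SatACA0 {M : Type} (S : AStr M) (𝔛 : Set (Set M)) : Prop :=
  PAminusSem S ∧
  (∀ X ∈ 𝔛, S.zero ∈ X → (∀ a, a ∈ X → S.add a S.one ∈ X) → ∀ a, a ∈ X) ∧
  (∀ φ x, Fml.IsArith φ → ∀ (v : ℕ → M) (w : ℕ → Set M), (∀ k, w k ∈ 𝔛) →
    {a : M | Sat S 𝔛 (Function.update v x a) w φ} ∈ 𝔛)

/-! ### Arithmetization inside a model

All notions below unfold the standard (`Δ₀`/`Σ₁`) arithmetized definitions at the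
meta-level, using the operations of a structure `S : AStr M`.  On models of `IΣ₁`
they agree with satisfaction of the corresponding arithmetic formulas. -/

namespace AStr

variable {M : Type} (S : AStr M)

/-- Interpretation of numerals. -/
def num : ℕ → M
  | 0 => S.zero
  | n + 1 => S.add (num n) S.one

def le (a b : M) : Prop := S.lt a b ∨ a = b

def two : M := S.add S.one S.one

/-- `p = ⟨a,b⟩` for the Cantor pairing function: `2p = (a+b)(a+b+1) + 2a`. -/
def PairRel (p a b : M) : Prop :=
  S.mul S.two p = S.add (S.mul (S.add a b) (S.add (S.add a b) S.one)) (S.mul S.two a)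

/-- `r = a mod m`. -/
def ModRel (a m r : M) : Prop := S.lt r m ∧ ∃ q, a = S.add (S.mul q m) r

/-- Gödel's β-function: `x = β(c, i)` where `c = ⟨a,b⟩` and `x = a mod (1 + (i+1)b)`. -/
def BetaRel (c i x : M) : Prop :=
  ∃ a b, S.PairRel c a b ∧ S.ModRel a (S.add S.one (S.mul (S.add i S.one) b)) x

/-- `s` codes a sequence of length `l` (as `s = ⟨c, l⟩`). -/
def SeqLen (s l : M) : Prop := ∃ c, S.PairRel s c l

/-- The `i`-th entry of the sequence coded by `s` is `x`. -/
def SeqAt (s i x : M) : Prop := ∃ c l, S.PairRel s c l ∧ S.lt i l ∧ S.BetaRel c i x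

/-- The fixed `Δ₀` coding formula `x ∈ y` for (bounded) sets:
`y = ⟨a,b⟩` and `a mod (1 + (x+1)b) = 1` with modulus `> 1`, and `x < y`. -/
def MemRel (x y : M) : Prop :=
  S.lt x y ∧ ∃ a b, S.PairRel y a b ∧
    S.lt S.one (S.add S.one (S.mul (S.add x S.one) b)) ∧
    S.ModRel a (S.add S.one (S.mul (S.add x S.one) b)) S.one

/-- Tagged pairs, used for codes of syntax: `x = ⟨tag, payload⟩`. -/
def Node (x tag payload : M) : Prop := S.PairRel x tag payload

/-- `x` is the code of the variable `v`. -/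
def VarC (v x : M) : Prop := S.Node x (S.num 0) v

def AddC (t u y : M) : Prop := ∃ p, S.PairRel p t u ∧ S.Node y (S.num 3) p
def MulC (t u y : M) : Prop := ∃ p, S.PairRel p t u ∧ S.Node y (S.num 4) p
def EqC (t u y : M) : Prop := ∃ p, S.PairRel p t u ∧ S.Node y (S.num 5) p
def LtC (t u y : M) : Prop := ∃ p, S.PairRel p t u ∧ S.Node y (S.num 6) p
def NotC (x y : M) : Prop := S.Node y (S.num 7) x
def ImpC (x y z : M) : Prop := ∃ p, S.PairRel p x y ∧ S.Node z (S.num 8) p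
def AllC (v x y : M) : Prop := ∃ p, S.PairRel p v x ∧ S.Node y (S.num 9) p

/-- `s` codes a construction sequence for terms. -/
def IsTermConSeq (s : M) : Prop :=
  ∀ i x, S.SeqAt s i x →
    (∃ v, S.VarC v x) ∨ S.Node x (S.num 1) (S.num 0) ∨ S.Node x (S.num 2) (S.num 0) ∨
    (∃ j k y z, S.lt j i ∧ S.lt k i ∧ S.SeqAt s j y ∧ S.SeqAt s k z ∧
      (S.AddC y z x ∨ S.MulC y z x))

/-- `x` is a term code (in the sense of `M`, possibly nonstandard). -/
def TermCodeM (x : M) : Prop := ∃ s i, S.IsTermConSeq s ∧ S.SeqAt s i x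

/-- `s` codes a construction sequence for (first-order) formulas. -/
def IsFmlConSeq (s : M) : Prop :=
  ∀ i x, S.SeqAt s i x →
    (∃ t u, S.TermCodeM t ∧ S.TermCodeM u ∧ (S.EqC t u x ∨ S.LtC t u x)) ∨
    (∃ j y, S.lt j i ∧ S.SeqAt s j y ∧ S.NotC y x) ∨
    (∃ j k y z, S.lt j i ∧ S.lt k i ∧ S.SeqAt s j y ∧ S.SeqAt s k z ∧ S.ImpC y z x) ∨
    (∃ j v y, S.lt j i ∧ S.SeqAt s j y ∧ S.AllC v y x)

/-- `x` is a formula code (in the sense of `M`, possibly nonstandard). -/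
def FmlCodeM (x : M) : Prop := ∃ s i, S.IsFmlConSeq s ∧ S.SeqAt s i x

/-- Construction sequences of pairs (term code, occurrence flag for the variable `v`). -/
def IsOccConSeq (v s : M) : Prop :=
  ∀ i p, S.SeqAt s i p → ∃ x f, S.PairRel p x f ∧
    ((S.VarC v x ∧ f = S.num 1) ∨
     (∃ u, S.VarC u x ∧ u ≠ v ∧ f = S.num 0) ∨
     ((S.Node x (S.num 1) (S.num 0) ∨ S.Node x (S.num 2) (S.num 0)) ∧ f = S.num 0) ∨
     (∃ j k y z g h pj pk, S.lt j i ∧ S.lt k i ∧ S.SeqAt s j pj ∧ S.SeqAt s k pk ∧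
       S.PairRel pj y g ∧ S.PairRel pk z h ∧ (S.AddC y z x ∨ S.MulC y z x) ∧
       ((f = S.num 1 ∧ (g = S.num 1 ∨ h = S.num 1)) ∨
        (f = S.num 0 ∧ g = S.num 0 ∧ h = S.num 0))))

/-- `f = 1` iff the variable `v` occurs in the term coded by `t` (`f ∈ {0,1}`). -/
def OccT (v t f : M) : Prop :=
  ∃ s i p, S.IsOccConSeq v s ∧ S.SeqAt s i p ∧ S.PairRel p t f

/-- Construction sequences of pairs (formula code, freeness flag for the variable `v`). -/
def IsFreeConSeq (v s : M) : Prop :=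
  ∀ i p, S.SeqAt s i p → ∃ x f, S.PairRel p x f ∧
    ((∃ t u, (S.EqC t u x ∨ S.LtC t u x) ∧
       ((f = S.num 1 ∧ (S.OccT v t (S.num 1) ∨ S.OccT v u (S.num 1))) ∨
        (f = S.num 0 ∧ S.OccT v t (S.num 0) ∧ S.OccT v u (S.num 0)))) ∨
     (∃ j y g pj, S.lt j i ∧ S.SeqAt s j pj ∧ S.PairRel pj y g ∧ S.NotC y x ∧ f = g) ∨
     (∃ j k y z g h pj pk, S.lt j i ∧ S.lt k i ∧ S.SeqAt s j pj ∧ S.SeqAt s k pk ∧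
       S.PairRel pj y g ∧ S.PairRel pk z h ∧ S.ImpC y z x ∧
       ((f = S.num 1 ∧ (g = S.num 1 ∨ h = S.num 1)) ∨
        (f = S.num 0 ∧ g = S.num 0 ∧ h = S.num 0))) ∨
     (∃ j w y g pj, S.lt j i ∧ S.SeqAt s j pj ∧ S.PairRel pj y g ∧ S.AllC w y x ∧
       ((w = v ∧ f = S.num 0) ∨ (w ≠ v ∧ f = g))))

/-- `f = 1` iff the variable `v` is free in the formula coded by `φ`. -/
def FreeF (v φ f : M) : Prop :=
  ∃ s i p, S.IsFreeConSeq v s ∧ S.SeqAt s i p ∧ S.PairRel p φ f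

/-- Construction sequences of pairs (term code, result of substituting `t` for `v`). -/
def IsSubTConSeq (v t s : M) : Prop :=
  ∀ i p, S.SeqAt s i p → ∃ x x', S.PairRel p x x' ∧
    ((S.VarC v x ∧ x' = t) ∨
     (∃ u, S.VarC u x ∧ u ≠ v ∧ x' = x) ∨
     ((S.Node x (S.num 1) (S.num 0) ∨ S.Node x (S.num 2) (S.num 0)) ∧ x' = x) ∨
     (∃ j k y z y' z' pj pk, S.lt j i ∧ S.lt k i ∧ S.SeqAt s j pj ∧ S.SeqAt s k pk ∧
       S.PairRel pj y y' ∧ S.PairRel pk z z' ∧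
       ((S.AddC y z x ∧ S.AddC y' z' x') ∨ (S.MulC y z x ∧ S.MulC y' z' x'))))

/-- Substitution of the term (code) `t` for the variable `v` in terms: `x' = x[t/v]`. -/
def SubT (v t x x' : M) : Prop :=
  ∃ s i p, S.IsSubTConSeq v t s ∧ S.SeqAt s i p ∧ S.PairRel p x x'

/-- Construction sequences for capture-free substitution in formulas. -/
def IsSubFConSeq (v t s : M) : Prop :=
  ∀ i p, S.SeqAt s i p → ∃ x x', S.PairRel p x x' ∧
    ((∃ a b a' b', S.SubT v t a a' ∧ S.SubT v t b b' ∧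
       ((S.EqC a b x ∧ S.EqC a' b' x') ∨ (S.LtC a b x ∧ S.LtC a' b' x'))) ∨
     (∃ j y y' pj, S.lt j i ∧ S.SeqAt s j pj ∧ S.PairRel pj y y' ∧
       S.NotC y x ∧ S.NotC y' x') ∨
     (∃ j k y z y' z' pj pk, S.lt j i ∧ S.lt k i ∧ S.SeqAt s j pj ∧ S.SeqAt s k pk ∧
       S.PairRel pj y y' ∧ S.PairRel pk z z' ∧ S.ImpC y z x ∧ S.ImpC y' z' x') ∨
     (∃ w y, S.AllC w y x ∧
       ((w = v ∧ x' = x) ∨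
        (w ≠ v ∧ (S.OccT w t (S.num 0) ∨ S.FreeF v y (S.num 0)) ∧
          ∃ j y' pj, S.lt j i ∧ S.SeqAt s j pj ∧ S.PairRel pj y y' ∧ S.AllC w y' x'))))

/-- Capture-free substitution in formulas: `x' = x[t/v]`, with `t` substitutable for `v`. -/
def SubF (v t x x' : M) : Prop :=
  ∃ s i p, S.IsSubFConSeq v t s ∧ S.SeqAt s i p ∧ S.PairRel p x x'

/-- `x` is (the code of) a generalization `∀v₁ ⋯ ∀vₖ y` of `y`. -/
def GenOf (y x : M) : Prop :=
  ∃ s i, S.SeqAt s (S.num 0) y ∧ S.SeqAt s i x ∧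
    ∀ j z z', S.SeqAt s j z → S.SeqAt s (S.add j S.one) z' → S.le (S.add j S.one) i →
      ∃ v, S.AllC v z z'

/-- Codes of instances of the logical axiom schemes (a Hilbert-style calculus with
modus ponens as the only rule; axioms are taken together with their generalizations). -/
def LogAxCore (x : M) : Prop :=
  -- A1 : a → (b → a)
  (∃ a b y, S.FmlCodeM a ∧ S.FmlCodeM b ∧ S.ImpC b a y ∧ S.ImpC a y x) ∨
  -- A2 : (a → (b → c)) → ((a → b) → (a → c))
  (∃ a b c bc abc ab ac r, S.FmlCodeM a ∧ S.FmlCodeM b ∧ S.FmlCodeM c ∧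
    S.ImpC b c bc ∧ S.ImpC a bc abc ∧ S.ImpC a b ab ∧ S.ImpC a c ac ∧
    S.ImpC ab ac r ∧ S.ImpC abc r x) ∨
  -- A3 : (¬b → ¬a) → (a → b)
  (∃ a b na nb l r, S.FmlCodeM a ∧ S.FmlCodeM b ∧ S.NotC a na ∧ S.NotC b nb ∧
    S.ImpC nb na l ∧ S.ImpC a b r ∧ S.ImpC l r x) ∨
  -- A4 : ∀v a → a[t/v]
  (∃ v t a a' al, S.TermCodeM t ∧ S.FmlCodeM a ∧ S.AllC v a al ∧ S.SubF v t a a' ∧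
    S.ImpC al a' x) ∨
  -- A5 : ∀v (a → b) → (∀v a → ∀v b)
  (∃ v a b ab alab ala alb r, S.FmlCodeM a ∧ S.FmlCodeM b ∧ S.ImpC a b ab ∧
    S.AllC v ab alab ∧ S.AllC v a ala ∧ S.AllC v b alb ∧ S.ImpC ala alb r ∧
    S.ImpC alab r x) ∨
  -- A6 : a → ∀v a, for v not free in a
  (∃ v a ala, S.FmlCodeM a ∧ S.FreeF v a (S.num 0) ∧ S.AllC v a ala ∧ S.ImpC a ala x) ∨
  -- E1 : t = t
  (∃ t, S.TermCodeM t ∧ S.EqC t t x) ∨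
  -- E2 : u = w → w = u (variables)
  (∃ u w vu vw e1 e2, S.VarC u vu ∧ S.VarC w vw ∧ S.EqC vu vw e1 ∧ S.EqC vw vu e2 ∧
    S.ImpC e1 e2 x) ∨
  -- E3 : u = w → (w = z → u = z) (variables)
  (∃ u w z vu vw vz e1 e2 e3 r, S.VarC u vu ∧ S.VarC w vw ∧ S.VarC z vz ∧
    S.EqC vu vw e1 ∧ S.EqC vw vz e2 ∧ S.EqC vu vz e3 ∧ S.ImpC e2 e3 r ∧ S.ImpC e1 r x) ∨
  -- E4 : congruence of +, ·, < with respect to = (variables)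
  (∃ u1 w1 u2 w2 a1 b1 a2 b2 e1 e2 s1 s2 es r,
    S.VarC u1 a1 ∧ S.VarC w1 b1 ∧ S.VarC u2 a2 ∧ S.VarC w2 b2 ∧
    S.EqC a1 b1 e1 ∧ S.EqC a2 b2 e2 ∧
    ((S.AddC a1 a2 s1 ∧ S.AddC b1 b2 s2 ∧ S.EqC s1 s2 es) ∨
     (S.MulC a1 a2 s1 ∧ S.MulC b1 b2 s2 ∧ S.EqC s1 s2 es) ∨
     (S.LtC a1 a2 s1 ∧ S.LtC b1 b2 s2 ∧ S.ImpC s1 s2 es)) ∧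
    S.ImpC e2 es r ∧ S.ImpC e1 r x) ∨
  -- E5 : congruence of = (variables)
  (∃ u1 w1 u2 w2 a1 b1 a2 b2 e1 e2 d1 d2 inner r,
    S.VarC u1 a1 ∧ S.VarC w1 b1 ∧ S.VarC u2 a2 ∧ S.VarC w2 b2 ∧
    S.EqC a1 b1 e1 ∧ S.EqC a2 b2 e2 ∧ S.EqC a1 a2 d1 ∧ S.EqC b1 b2 d2 ∧
    S.ImpC d1 d2 inner ∧ S.ImpC e2 inner r ∧ S.ImpC e1 r x)

/-- Logical axioms: generalizations of instances of the axiom schemes. -/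
def LogAx (x : M) : Prop := ∃ y, S.LogAxCore y ∧ S.GenOf y x

/-- `s` codes a proof of `φ` from the set `Γ ⊆ M` of (codes of) sentences:
every entry is a logical axiom, a member of `Γ`, or follows by modus ponens. -/
def ProofFrom (Γ : Set M) (s φ : M) : Prop :=
  (∃ i, S.SeqAt s i φ) ∧
  ∀ i x, S.SeqAt s i x →
    S.LogAx x ∨ x ∈ Γ ∨
    (∃ j k y z, S.lt j i ∧ S.lt k i ∧ S.SeqAt s j y ∧ S.SeqAt s k z ∧ S.ImpC y x z)

/-- Provability (in the sense of `M`) from the axiom set `Γ ⊆ M`. -/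
def ProvFrom (Γ : Set M) (φ : M) : Prop := ∃ s, S.ProofFrom Γ s φ

/-- `M ⊨ Con_Γ` : there is no (possibly nonstandard) proof of a contradiction from `Γ`. -/
def ConOf (Γ : Set M) : Prop :=
  ¬ ∃ φ nφ, S.NotC φ nφ ∧ S.ProvFrom Γ φ ∧ S.ProvFrom Γ nφ

/-- `M ⊨ Con_T` for a (standard) theory `T`: `M` thinks every finite subtheory
of `T` is consistent. -/
def SatConTheory (T : Set Fml) : Prop :=
  ∀ F : Finset Fml, ↑F ⊆ T → S.ConOf {x : M | ∃ φ ∈ F, x = S.num (Fml.code φ)}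

/-! ### Coded sets, standard systems, filters on `P_𝔛` -/

/-- `A` is unbounded in `M`. -/
def Unb (A : Set M) : Prop := ∀ b, ∃ a ∈ A, S.lt b a

/-- `P_𝔛`: the collection of unbounded sets in `𝔛` (a partial order under `⊆`). -/
def PX (𝔛 : Set (Set M)) : Set (Set M) := {A | A ∈ 𝔛 ∧ S.Unb A}

/-- The `a`-th slice `(A)_a = {b | ⟨a,b⟩ ∈ A}`. -/
def SliceAt (A : Set M) (a : M) : Set M := {b | ∃ p, S.PairRel p a b ∧ p ∈ A}

/-- A function `M → M` is coded in `𝔛` if its graph (via the canonical pairing)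
belongs to `𝔛`. -/
def CodedFun (𝔛 : Set (Set M)) (f : M → M) : Prop :=
  ∃ G ∈ 𝔛, ∀ a b, f a = b ↔ b ∈ S.SliceAt G a

/-- A family `F` of sets is definable (over `(M,𝔛)`) if `{a | (A)_a ∈ F} ∈ 𝔛`
for every `A ∈ 𝔛`. -/
def DefinableFam (𝔛 F : Set (Set M)) : Prop :=
  ∀ A ∈ 𝔛, {a : M | S.SliceAt A a ∈ F} ∈ 𝔛

/-- `F` is a complete family: every function coded in `𝔛` with bounded range is
constant on some member of `F`. -/
def CompleteOn (𝔛 F : Set (Set M)) : Prop :=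
  ∀ f : M → M, S.CodedFun 𝔛 f → (∃ b, ∀ a, S.lt (f a) b) →
    ∃ A ∈ F, ∀ x ∈ A, ∀ y ∈ A, f x = f y

/-- The standard system `SSy(M)`: standard parts of the `M`-coded sets. -/
def SSy : Set (Set ℕ) := {A | ∃ c : M, ∀ n : ℕ, (n ∈ A ↔ S.MemRel (S.num n) c)}

/-- `M` is nonstandard. -/
def Nonstd : Prop := ∃ a : M, ∀ n : ℕ, a ≠ S.num n

/-- `M` is recursively saturated: every recursive type (in the variable `0`, with
finitely many parameters assigned to the variables `1, …, k`) that is finitely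
realized in `M` is realized in `M`. -/
def RecSat : Prop :=
  ∀ (p : Set Fml) (k : ℕ) (par : ℕ → M),
    (∀ φ ∈ p, Fml.IsFO φ ∧ φ.freeN ⊆ Finset.range (k + 1)) →
    ComputablePred (fun n => ∃ φ ∈ p, Fml.code φ = n) →
    (∀ F : Finset Fml, ↑F ⊆ p →
      ∃ a : M, ∀ φ ∈ F, SatFO S (fun i => if i = 0 then a else par i) φ) →
    ∃ a : M, ∀ φ ∈ p, SatFO S (fun i => if i = 0 then a else par i) φ

/-- `c` is the least code of the (bounded) set `A`. -/
def IsLeastCode (A : Set M) (c : M) : Prop :=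
  (∀ x, S.MemRel x c ↔ x ∈ A) ∧ ∀ c', (∀ x, S.MemRel x c' ↔ x ∈ A) → S.le c c'

/-- `A* = {⟨A ∩ I_{<a}⟩ | a ∈ M}`, the set of least codes of initial segments of `A`. -/
def star (A : Set M) : Set M :=
  {c | ∃ a, S.IsLeastCode (A ∩ {b | S.lt b a}) c}

end AStr

/-! ### Filters and partial orders of sets -/

/-- A filter on a partial order `P` of sets, ordered by inclusion: a proper, nonempty,
upward closed, downward directed subset of `P`. -/
def IsFilterOn {α : Type} (P F : Set (Set α)) : Prop :=
  F ⊆ P ∧ F.Nonempty ∧ F ≠ P ∧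
  (∀ A ∈ F, ∀ B ∈ P, A ⊆ B → B ∈ F) ∧
  (∀ A ∈ F, ∀ B ∈ F, ∃ C ∈ F, C ⊆ A ∧ C ⊆ B)

/-- An ultrafilter on a partial order of sets: a maximal filter. -/
def IsUltraOn {α : Type} (P U : Set (Set α)) : Prop :=
  IsFilterOn P U ∧ ∀ F, IsFilterOn P F → U ⊆ F → F = U

/-- A principal filter on a partial order of sets. -/
def IsPrincipalOn {α : Type} (P U : Set (Set α)) : Prop :=
  ∃ A ∈ P, U = {B | B ∈ P ∧ A ⊆ B}

/-- The countable chain condition for a partial order `P` of sets (ordered by `⊆`):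
every uncountable subset contains two distinct compatible elements. -/
def CCCOn {α : Type} (P : Set (Set α)) : Prop :=
  ∀ A : Set (Set α), A ⊆ P → ¬A.Countable →
    ∃ X ∈ A, ∃ Y ∈ A, X ≠ Y ∧ ∃ Z ∈ P, Z ⊆ X ∧ Z ⊆ Y

/-- `𝔛` is a Boolean algebra of sets. -/
def IsBoolAlg {α : Type} (𝔛 : Set (Set α)) : Prop :=
  Set.univ ∈ 𝔛 ∧ ∅ ∈ 𝔛 ∧
  (∀ A ∈ 𝔛, ∀ B ∈ 𝔛, A ∪ B ∈ 𝔛) ∧ (∀ A ∈ 𝔛, ∀ B ∈ 𝔛, A ∩ B ∈ 𝔛) ∧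
  (∀ A ∈ 𝔛, Aᶜ ∈ 𝔛)

/-- A filter on the Boolean algebra `𝔛`. -/
def IsBAFilter {α : Type} (𝔛 F : Set (Set α)) : Prop :=
  F ⊆ 𝔛 ∧ F.Nonempty ∧ ∅ ∉ F ∧
  (∀ A ∈ F, ∀ B ∈ 𝔛, A ⊆ B → B ∈ F) ∧
  (∀ A ∈ F, ∀ B ∈ F, A ∩ B ∈ F)

/-- An ultrafilter on the Boolean algebra `𝔛`: a maximal filter. -/
def IsBAUltra {α : Type} (𝔛 F : Set (Set α)) : Prop :=
  IsBAFilter 𝔛 F ∧ ∀ G, IsBAFilter 𝔛 G → F ⊆ G → G = F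

/-! ### Scott sets -/

/-- Oracle partial recursive functions: partial recursive in the oracle `O`. -/
inductive RecursiveIn (O : ℕ →. ℕ) : (ℕ →. ℕ) → Prop
  | oracle : RecursiveIn O O
  | zero : RecursiveIn O (pure 0)
  | succ : RecursiveIn O Nat.succ
  | left : RecursiveIn O ↑fun n : ℕ => n.unpair.1
  | right : RecursiveIn O ↑fun n : ℕ => n.unpair.2
  | pair {f g} : RecursiveIn O f → RecursiveIn O g →
      RecursiveIn O fun n => Nat.pair <$> f n <*> g n
  | comp {f g} : RecursiveIn O f → RecursiveIn O g →
      RecursiveIn O fun n => g n >>= f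
  | prec {f g} : RecursiveIn O f → RecursiveIn O g →
      RecursiveIn O (Nat.unpaired fun a n =>
        n.rec (f a) fun y IH => do let i ← IH; g (Nat.pair a (Nat.pair y i)))
  | rfind {f} : RecursiveIn O f →
      RecursiveIn O fun a => Nat.rfind fun n => (fun m => m = 0) <$> f (Nat.pair a n)

/-- The characteristic function of a set of natural numbers. -/
noncomputable def chi (A : Set ℕ) : ℕ →. ℕ :=
  fun n => Part.some (@ite _ (n ∈ A) (Classical.propDecidable _) 1 0)

/-- Turing reducibility: `B ≤_T A`. -/
def TuringLe (B A : Set ℕ) : Prop := RecursiveIn (chi A) (chi B)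

/-- A set of naturals coding a binary tree (codes of finite binary strings,
closed under initial segments). -/
def IsTreeCode (T : Set ℕ) : Prop :=
  (∀ n ∈ T, ∃ l : List Bool, Encodable.encode l = n) ∧
  (∀ l₁ l₂ : List Bool, l₁ <+: l₂ → Encodable.encode l₂ ∈ T → Encodable.encode l₁ ∈ T)

/-- `B` (as the characteristic function of a branch) is an infinite branch of the
binary tree coded by `T`. -/
def IsBranchThrough (B T : Set ℕ) : Prop :=
  ∀ n : ℕ, ∃ l : List Bool, l.length = n ∧
    (∀ i : Fin l.length, (l.get i = true ↔ (i : ℕ) ∈ B)) ∧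
    Encodable.encode l ∈ T

/-- A Scott set: a nonempty Boolean algebra of subsets of `ω` closed under relative
recursion and containing an infinite branch of every infinite binary tree coded in it. -/
def IsScottSet (𝔛 : Set (Set ℕ)) : Prop :=
  𝔛.Nonempty ∧
  (∀ A ∈ 𝔛, ∀ B ∈ 𝔛, A ∪ B ∈ 𝔛) ∧
  (∀ A ∈ 𝔛, Aᶜ ∈ 𝔛) ∧
  (∀ A ∈ 𝔛, ∀ B : Set ℕ, TuringLe B A → B ∈ 𝔛) ∧
  (∀ T ∈ 𝔛, IsTreeCode T → T.Infinite → ∃ B ∈ 𝔛, IsBranchThrough B T)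

/-- The sets represented in the theory `T`. -/
def repSet (T : Set Fml) : Set (Set ℕ) :=
  {A | ∃ φ : Fml, Fml.IsFO φ ∧ φ.freeN ⊆ {0} ∧
    ∀ n : ℕ, (n ∈ A → Proves T (φ.substN 0 (numeral n))) ∧
      (n ∉ A → Proves T (Fml.not (φ.substN 0 (numeral n))))}

/-- Martin's axiom. -/
def MartinsAxiom : Prop :=
  ∀ (P : Type) (_ : PartialOrder P),
    (∀ A : Set P, ¬A.Countable → ∃ x ∈ A, ∃ y ∈ A, x ≠ y ∧ ∃ z, z ≤ x ∧ z ≤ y) →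
    ∀ 𝒟 : Set (Set P), (∀ D ∈ 𝒟, ∀ x : P, ∃ y ∈ D, y ≤ x) →
      Cardinal.mk 𝒟 < Cardinal.continuum →
      ∃ F : Set P, F.Nonempty ∧ (∀ x ∈ F, ∀ y, x ≤ y → y ∈ F) ∧
        (∀ x ∈ F, ∀ y ∈ F, ∃ z ∈ F, z ≤ x ∧ z ≤ y) ∧
        ∀ D ∈ 𝒟, (F ∩ D).Nonempty


/-! ### Cantor pairs and Chinese remainders in an ordered semiring

The hypotheses `hz` and `hd` below (least element `0`, discreteness with subtraction) are those
available in a model of `PA⁻`. -/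

section Arithmetic

variable {R : Type} [CommSemiring R] [LinearOrder R] [IsStrictOrderedRing R]

/-- Injectivity of the Cantor pairing: `s (s + 1) + 2 a` with `a ≤ s` lies strictly below
`(s + 1) (s + 2)`, so it determines `s = a + b` and then `a`. -/
theorem pair_inj_aux (hz : ∀ x : R, 0 ≤ x) (hd : ∀ x y : R, x < y → ∃ c, y = x + c + 1)
    {a b a' b' : R}
    (h : (a + b) * (a + b + 1) + (1 + 1) * a = (a' + b') * (a' + b' + 1) + (1 + 1) * a') :
    a = a' ∧ b = b' := by
  have key : ∀ a b a' b' : R, a + b < a' + b' →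
      (a + b) * (a + b + 1) + (1 + 1) * a ≠ (a' + b') * (a' + b' + 1) + (1 + 1) * a' := by
    intro a b a' b' hlt h
    obtain ⟨c, hc⟩ := hd _ _ hlt
    rw [hc] at h
    have h2 : ((a + b) * (a + b + 1) + (1 + 1) * a) + 0 = ((a + b) * (a + b + 1) + (1 + 1) * a) +
        ((1 + 1) * b + (1 + 1) * a' + c * (2 * (a + b) + c + 3) + 1 + 1) := by
      rw [add_zero]; exact h.trans (by ring)
    have h3 := add_left_cancel h2
    have := hz ((1 + 1) * b + (1 + 1) * a' + c * (2 * (a + b) + c + 3) + 1)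
    have h4 := add_pos_of_nonneg_of_pos this (zero_lt_one (α := R))
    exact absurd h3 h4.ne
  have hs : a + b = a' + b' := by
    rcases lt_trichotomy (a + b) (a' + b') with h1 | h1 | h1
    · exact absurd h (key _ _ _ _ h1)
    · exact h1
    · exact absurd h.symm (key _ _ _ _ h1)
  rw [hs] at h
  have h2 := add_left_cancel h
  have h11 : (0 : R) < 1 + 1 := by norm_num
  have ha : a = a' := le_antisymm
    (le_of_mul_le_mul_left h2.le h11) (le_of_mul_le_mul_left h2.ge h11)
  subst ha
  exact ⟨rfl, add_left_cancel hs⟩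

/-- `m_k = 1 + (k+1)b` is invertible modulo `m_y` when `y - k` divides `b`. -/
theorem beta_coprime {R : Type} [CommSemiring R] {b y k δ e D' : R} (hy : y = k + δ)
    (hb : b = δ * e) (hD : (y + 1) * b = D' + 1) :
    ∃ u r, u * (1 + (k + 1) * b) = r * (1 + (y + 1) * b) + 1 := by
  refine ⟨(y + 1) * (y + 1) * e * (D' + 1), (k + 1) * (y + 1) * e * (D' + 1) + D', ?_⟩
  -- `(y+1) m_k = (k+1) m_y + δ` and `(y+1) δ e = D' + 1 ≡ -1` modulo `m_y`
  have h1 : (y + 1) * (1 + (k + 1) * b) = (k + 1) * (1 + (y + 1) * b) + δ := by rw [hy]; ring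
  have h2 : (y + 1) * e * δ = D' + 1 := by rw [← hD, hb]; ring
  calc (y + 1) * (y + 1) * e * (D' + 1) * (1 + (k + 1) * b)
      = ((y + 1) * (1 + (k + 1) * b)) * ((y + 1) * e * (D' + 1)) := by ring
    _ = (k + 1) * (1 + (y + 1) * b) * ((y + 1) * e * (D' + 1)) +
          ((y + 1) * e * δ) * (D' + 1) := by rw [h1]; ring
    _ = _ := by rw [h2, hD]; ring

/-- A number cannot be both `0` and `1` modulo `m > 1`. -/
theorem beta_mod_unique (hz : ∀ x : R, 0 ≤ x) (hd : ∀ x y : R, x < y → ∃ c, y = x + c + 1)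
    {q q' m : R} (hm : 1 < m) : q * m ≠ q' * m + 1 := by
  intro h
  rcases lt_or_ge q' q with h1 | h1
  · obtain ⟨c, rfl⟩ := hd _ _ h1
    have h2 : q' * m + (c * m + m) = q' * m + 1 := by rw [← h]; ring
    have h3 := add_left_cancel h2
    have h4 : m ≤ c * m + m := le_add_of_nonneg_left (hz _)
    exact absurd (h3 ▸ h4) (not_le.2 hm)
  · have h2 : q * m ≤ q' * m := mul_le_mul_of_nonneg_right h1 (hz m)
    rw [h] at h2
    exact absurd (lt_add_one (q' * m)) (not_lt.2 h2)

/-- The invariant of the Chinese remainder recursion: `a` has the prescribed residues modulo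
`m_x = 1 + (x+1)b` for `x < k`, and `P` is divisible by these `m_x` and invertible modulo the
remaining `m_y`, `k ≤ y < n`. -/
def CrtInv {R : Type} [CommSemiring R] [LinearOrder R] (X : Set R) (n b k : R) : Prop :=
  ∃ a P : R, (∀ x, x < k → (x ∈ X → ∃ q, a = q * (1 + (x + 1) * b) + 1) ∧
      (x ∉ X → ∃ q, a = q * (1 + (x + 1) * b))) ∧
    (∀ x, x < k → ∃ e, P = e * (1 + (x + 1) * b)) ∧
    (∀ y, y < n → ¬ y < k → ∃ u r, u * P = r * (1 + (y + 1) * b) + 1)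

theorem crt_zero {R : Type} [CommSemiring R] [LinearOrder R] (hz : ∀ x : R, 0 ≤ x) (X : Set R)
    (n b : R) : CrtInv X n b 0 :=
  ⟨0, 1, fun x hx => absurd hx (not_lt.2 (hz x)), fun x hx => absurd hx (not_lt.2 (hz x)),
    fun _ _ _ => ⟨1, 0, by ring⟩⟩

/-- The step of the Chinese remainder recursion: `a` is corrected by a multiple of `P` so as to
have the right residue modulo `m_k`, and `P` is replaced by `P m_k`. -/
theorem crt_succ (hz : ∀ x : R, 0 ≤ x) (hd : ∀ x y : R, x < y → ∃ c, y = x + c + 1)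
    (X : Set R) {n b k : R} (hb : 0 < b) (hdiv : ∀ i, i < n → ∃ e, b = (i + 1) * e)
    (hk : k < n) (h : CrtInv X n b k) : CrtInv X n b (k + 1) := by
  obtain ⟨a, P, ha, hP, hu⟩ := h
  have hlt : ∀ x, x < k + 1 → x < k ∨ x = k := by
    intro x hx
    rcases lt_trichotomy x k with h | h | h
    · exact Or.inl h
    · exact Or.inr h
    · obtain ⟨c, rfl⟩ := hd _ _ h
      exact absurd hx (not_lt.2 (by
        have := hz c
        calc k + 1 ≤ k + 1 + c := le_add_of_nonneg_right this
          _ = k + c + 1 := by ring))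
  obtain ⟨u, r, hur⟩ := hu k hk (lt_irrefl k)
  have step : ∀ t : R, ∃ a' : R, (∃ q, a' = q * (1 + (k + 1) * b) + t) ∧
      ∃ z, a' = a + P * z := by
    intro t
    -- `z = u (t - a)` modulo `m_k`, with `-a` written as `a (m_k - 1)`
    refine ⟨a + P * (u * (t + a * ((k + 1) * b))),
      ⟨a + r * (t + a * ((k + 1) * b)), ?_⟩, ⟨_, rfl⟩⟩
    calc a + P * (u * (t + a * ((k + 1) * b)))
        = a + (u * P) * (t + a * ((k + 1) * b)) := by ring
      _ = _ := by rw [hur]; ring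
  obtain ⟨a', ⟨q0, hq0⟩, z, hz'⟩ : ∃ a' : R,
      (∃ q, (k ∈ X → a' = q * (1 + (k + 1) * b) + 1) ∧ (k ∉ X → a' = q * (1 + (k + 1) * b))) ∧
      ∃ z, a' = a + P * z := by
    by_cases hX : k ∈ X
    · obtain ⟨a', ⟨q, hq⟩, hz'⟩ := step 1
      exact ⟨a', ⟨q, fun _ => hq, fun h => absurd hX h⟩, hz'⟩
    · obtain ⟨a', ⟨q, hq⟩, hz'⟩ := step 0
      exact ⟨a', ⟨q, fun h => absurd h hX, fun _ => by rw [hq, add_zero]⟩, hz'⟩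
  refine ⟨a', P * (1 + (k + 1) * b), ?_, ?_, ?_⟩
  · intro x hx
    rcases hlt x hx with hx | rfl
    · obtain ⟨e, he⟩ := hP x hx
      refine ⟨fun hX => ?_, fun hX => ?_⟩
      · obtain ⟨q, hq⟩ := (ha x hx).1 hX
        exact ⟨q + e * z, by rw [hz', hq, he]; ring⟩
      · obtain ⟨q, hq⟩ := (ha x hx).2 hX
        exact ⟨q + e * z, by rw [hz', hq, he]; ring⟩
    · exact ⟨fun hX => ⟨q0, hq0.1 hX⟩, fun hX => ⟨q0, hq0.2 hX⟩⟩
  · intro x hx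
    rcases hlt x hx with hx | rfl
    · obtain ⟨e, he⟩ := hP x hx
      exact ⟨e * (1 + (k + 1) * b), by rw [he]; ring⟩
    · exact ⟨P, rfl⟩
  · intro y hy hyk
    have hky : k < y := lt_of_lt_of_le (lt_add_one k) (not_lt.1 hyk)
    obtain ⟨i, hi⟩ := hd _ _ hky
    have hin : i < n := by
      refine lt_of_lt_of_le (lt_add_one i) (le_trans ?_ hy.le)
      rw [hi, add_assoc]; exact le_add_of_nonneg_left (hz k)
    obtain ⟨e, he⟩ := hdiv i hin
    have hpos : 0 < (y + 1) * b :=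
      mul_pos (add_pos_of_nonneg_of_pos (hz y) zero_lt_one) hb
    obtain ⟨D', hD'⟩ := hd _ _ hpos
    obtain ⟨u', r', h'⟩ := beta_coprime (y := y) (k := k) (by rw [hi, add_assoc]) he
      (by rw [hD', zero_add])
    obtain ⟨u, r, hur⟩ := hu y hy (not_lt.2 hky.le)
    refine ⟨u * u', r * r' * (1 + (y + 1) * b) + r + r', ?_⟩
    calc u * u' * (P * (1 + (k + 1) * b)) = (u * P) * (u' * (1 + (k + 1) * b)) := by ring
      _ = _ := by rw [hur, h']; ring

/-- If `x + 1` divides `b > 0` then `x` is smaller than any pair `⟨a, b⟩`; this provides the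
bound `x < c` built into the coding formula. -/
theorem pair_large (hz : ∀ x : R, 0 ≤ x) (hd : ∀ x y : R, x < y → ∃ c, y = x + c + 1)
    {a b c e x : R} (hb : 0 < b) (hn : b = (x + 1) * e)
    (hc : (1 + 1) * c = (a + b) * (a + b + 1) + (1 + 1) * a) : x < c := by
  have h1 : ∀ y : R, 0 < y → 1 ≤ y := by
    intro y hy
    obtain ⟨d, rfl⟩ := hd _ _ hy
    rw [zero_add]; exact le_add_of_nonneg_left (hz d)
  have he : 1 ≤ e := by
    refine h1 e (lt_of_le_of_ne (hz e) ?_)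
    rintro rfl
    rw [mul_zero] at hn
    exact hb.ne' hn
  have hnb : x + 1 ≤ b := by rw [hn]; exact le_mul_of_one_le_right (hz _) he
  refine lt_of_lt_of_le (lt_of_lt_of_le (lt_add_one x) hnb) ?_
  refine le_of_mul_le_mul_left ?_ (show (0 : R) < 1 + 1 by norm_num)
  rw [hc]
  have h2 : b ≤ a + b := le_add_of_nonneg_left (hz a)
  have h3 : 1 + 1 ≤ a + b + 1 := add_le_add_left ((h1 b hb).trans h2) 1
  calc (1 + 1) * b = b * (1 + 1) := mul_comm _ _
    _ ≤ (a + b) * (a + b + 1) := mul_le_mul h2 h3 (by norm_num) (hz _)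
    _ ≤ _ := le_add_of_nonneg_right (hz _)

end Arithmetic

/-! ### Models of `PA⁻` as ordered semirings -/

section Semiring

variable {M : Type} {S : AStr M}

/-- The commutative semiring structure of a model of `PA⁻`. -/
@[reducible] def PAminusSem.commSemiring (h : PAminusSem S) : CommSemiring M :=
  have hadd := h.1
  have hcomm := h.2.1
  have hmul := h.2.2.1
  have hmcomm := h.2.2.2.1
  have hdist := h.2.2.2.2.1
  have hz := h.2.2.2.2.2.1
  have hmz := h.2.2.2.2.2.2.1
  have hmo := h.2.2.2.2.2.2.2.1
  { add := S.add
    mul := S.mul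
    zero := S.zero
    one := S.one
    add_assoc := fun a b c => (hadd a b c).symm
    zero_add := fun a => (hcomm S.zero a).trans (hz a)
    add_zero := hz
    add_comm := hcomm
    mul_assoc := fun a b c => (hmul a b c).symm
    mul_comm := hmcomm
    one_mul := fun a => (hmcomm S.one a).trans (hmo a)
    mul_one := hmo
    left_distrib := hdist
    right_distrib := fun a b c => by
      change S.mul (S.add a b) c = S.add (S.mul a c) (S.mul b c)
      rw [hmcomm, hdist, hmcomm c a, hmcomm c b]
    zero_mul := fun a => (hmcomm S.zero a).trans (hmz a)
    mul_zero := hmz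
    nsmul := @nsmulRec M ⟨S.zero⟩ ⟨S.add⟩
    nsmul_zero := fun _ => rfl
    nsmul_succ := fun _ _ => rfl }

/-- The linear order of a model of `PA⁻`. -/
@[reducible] noncomputable def PAminusSem.linearOrder (h : PAminusSem S) : LinearOrder M :=
  have htr := h.2.2.2.2.2.2.2.2.1
  have hirr := h.2.2.2.2.2.2.2.2.2.1
  have htri := h.2.2.2.2.2.2.2.2.2.2.1
  { le := S.le
    lt := S.lt
    le_refl := fun a => Or.inr rfl
    le_trans := by
      rintro a b c (h1 | rfl) (h2 | rfl)
      · exact Or.inl (htr _ _ _ h1 h2)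
      · exact Or.inl h1
      · exact Or.inl h2
      · exact Or.inr rfl
    lt_iff_le_not_ge := by
      intro a b
      constructor
      · intro h
        refine ⟨Or.inl h, ?_⟩
        rintro (h' | rfl)
        · exact hirr _ (htr _ _ _ h h')
        · exact hirr _ h
      · rintro ⟨h1 | rfl, h2⟩
        · exact h1
        · exact absurd (Or.inr rfl) h2
    le_antisymm := by
      rintro a b (h1 | rfl) (h2 | h2)
      · exact absurd (htr _ _ _ h1 h2) (hirr _)
      · exact h2.symm
      · rfl
      · rfl
    le_total := by
      intro a b
      rcases htri a b with h1 | h1 | h1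
      · exact Or.inl (Or.inl h1)
      · exact Or.inl (Or.inr h1)
      · exact Or.inr (Or.inl h1)
    toDecidableLE := Classical.decRel _ }

theorem PAminusSem.strictOrdered (h : PAminusSem S) :
    letI := h.commSemiring
    letI := h.linearOrder
    IsStrictOrderedRing M := by
  let := h.commSemiring
  let := h.linearOrder
  obtain ⟨-, -, -, -, -, -, -, -, -, hirr, -, haddlt, hmullt, -, h01, -, -⟩ := id h
  have : IsOrderedAddMonoid M :=
    { add_le_add_left := by
        rintro a b (h1 | rfl) c
        · exact Or.inl (haddlt _ _ _ h1)
        · exact Or.inr rfl }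
  have : IsOrderedCancelAddMonoid M := IsOrderedCancelAddMonoid.of_add_lt_add_left (by
    intro a b c h1
    rw [add_comm a b, add_comm a c]
    exact haddlt _ _ _ h1)
  have : ZeroLEOneClass M := ⟨Or.inl h01⟩
  have : Nontrivial M := ⟨S.zero, S.one, fun h => hirr S.zero (h.symm ▸ h01 : S.lt S.zero S.zero)⟩
  exact
    { mul_lt_mul_of_pos_left := by
        intro a ha b c hbc
        change a * b < a * c
        rw [mul_comm a b, mul_comm a c]
        exact hmullt _ _ _ ha hbc
      mul_lt_mul_of_pos_right := fun a ha b c hbc => hmullt _ _ _ ha hbc }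

theorem PAminusSem.nonneg (h : PAminusSem S) :
    letI := h.commSemiring
    letI := h.linearOrder
    ∀ x : M, 0 ≤ x := by
  intro x
  rcases h.2.2.2.2.2.2.2.2.2.2.2.2.2.2.2.2 x with h1 | h1
  · exact Or.inr h1.symm
  · exact Or.inl h1

theorem PAminusSem.sub (h : PAminusSem S) :
    letI := h.commSemiring
    letI := h.linearOrder
    ∀ x y : M, x < y → ∃ c, y = x + c + 1 := by
  let := h.commSemiring
  let := h.linearOrder
  obtain ⟨-, -, -, -, -, -, -, -, -, hirr, -, -, -, hsub, -, hdisc, hz⟩ := id h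
  intro x y hxy
  obtain ⟨c, hc⟩ := hsub x y hxy
  rcases hz c with rfl | h0
  · have : x = y := (add_zero x).symm.trans hc
    exact absurd (this ▸ hxy) (hirr x)
  · rcases hdisc c h0 with rfl | h1
    · exact ⟨0, by rw [add_zero]; exact hc.symm⟩
    · obtain ⟨d, rfl⟩ := hsub _ _ h1
      refine ⟨d, ?_⟩
      rw [← hc]
      change x + (1 + d) = x + d + 1
      ring

theorem PAminusSem.lt_succ (h : PAminusSem S) {x y : M} :
    S.lt x (S.add y S.one) ↔ S.lt x y ∨ x = y := by
  let := h.commSemiring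
  let := h.linearOrder
  have := h.strictOrdered
  change x < y + 1 ↔ x ≤ y
  constructor
  · intro h1
    by_contra h2
    obtain ⟨c, rfl⟩ := h.sub _ _ (not_le.1 h2)
    refine absurd h1 (not_lt.2 ?_)
    rw [add_right_comm]
    exact le_add_of_nonneg_right (h.nonneg c)
  · intro h1
    exact lt_of_le_of_lt h1 (lt_add_one y)

theorem PAminusSem.not_lt_zero (h : PAminusSem S) (x : M) : ¬ S.lt x S.zero := by
  let := h.commSemiring
  let := h.linearOrder
  have := h.nonneg x
  exact not_lt.2 this

theorem PAminusSem.pair_inj (h : PAminusSem S) {p a b a' b' : M} (h1 : S.PairRel p a b)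
    (h2 : S.PairRel p a' b') : a = a' ∧ b = b' := by
  let := h.commSemiring
  let := h.linearOrder
  have := h.strictOrdered
  exact pair_inj_aux h.nonneg h.sub (h1.symm.trans h2)

end Semiring

/-! ### Arithmetical comprehension and coded functions -/

section Comprehension

variable {M : Type} {S : AStr M} {𝔛 : Set (Set M)}

theorem sat_and {v : ℕ → M} {w : ℕ → Set M} {φ ψ : Fml} :
    Sat S 𝔛 v w (φ.and ψ) ↔ Sat S 𝔛 v w φ ∧ Sat S 𝔛 v w ψ := by
  simp [Fml.and, Sat]

theorem sat_ex {v : ℕ → M} {w : ℕ → Set M} {x : ℕ} {φ : Fml} :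
    Sat S 𝔛 v w (Fml.ex x φ) ↔ ∃ a, Sat S 𝔛 (Function.update v x a) w φ := by
  simp [Fml.ex, Sat]

theorem arith_and {φ ψ : Fml} : (φ.and ψ).IsArith ↔ φ.IsArith ∧ ψ.IsArith := by
  simp [Fml.and, Fml.IsArith]

theorem arith_ex {x : ℕ} {φ : Fml} : (Fml.ex x φ).IsArith ↔ φ.IsArith := by
  simp [Fml.ex, Fml.IsArith]

/-- The formula `p = ⟨a, b⟩`. -/
def pairF (p a b : PTerm) : Fml :=
  .eq (.mul (.add .one .one) p)
    (.add (.mul (.add a b) (.add (.add a b) .one)) (.mul (.add .one .one) a))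

theorem sat_pairF {v : ℕ → M} {w : ℕ → Set M} {p a b : PTerm} :
    Sat S 𝔛 v w (pairF p a b) ↔ S.PairRel (p.val S v) (a.val S v) (b.val S v) := Iff.rfl

/-- The formula expressing that the pair of the variables `x`, `y` lies in the `k`-th set
parameter; the variable `50` is reserved for the pair. -/
def grF (k x y : ℕ) : Fml := .ex 50 (.and (pairF (.var 50) (.var x) (.var y)) (.mem (.var 50) k))

theorem sat_grF {v : ℕ → M} {w : ℕ → Set M} {k x y : ℕ} (hx : x ≠ 50) (hy : y ≠ 50) :
    Sat S 𝔛 v w (grF k x y) ↔ v y ∈ S.SliceAt (w k) (v x) := by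
  simp [grF, sat_ex, sat_and, sat_pairF, Sat, PTerm.val, AStr.SliceAt, hx, hy]

theorem arith_pairF {p a b : PTerm} : (pairF p a b).IsArith := trivial

theorem arith_grF {k x y : ℕ} : (grF k x y).IsArith := by
  simp [grF, arith_ex, arith_and, arith_pairF, Fml.IsArith]

theorem numeral_val {v : ℕ → M} (n : ℕ) : (numeral n).val S v = S.num n := by
  induction n with
  | zero => rfl
  | succ n ih => simp [numeral, PTerm.val, AStr.num, ih]

/-- The set-parameter assignment listing `A`, `B`, `C`. -/
def params (A B C : Set M) : ℕ → Set M
  | 0 => A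
  | 1 => B
  | _ => C

theorem params_mem {A B C : Set M} (hA : A ∈ 𝔛) (hB : B ∈ 𝔛) (hC : C ∈ 𝔛) :
    ∀ k, params A B C k ∈ 𝔛
  | 0 => hA
  | 1 => hB
  | _ + 2 => hC

/-- Induction for properties whose extension lies in `𝔛`. -/
theorem SatACA0.induct (h : SatACA0 S 𝔛) {P : M → Prop} (hP : {n | P n} ∈ 𝔛) (h0 : P S.zero)
    (hs : ∀ n, P n → P (S.add n S.one)) (n : M) : P n :=
  h.2.1 _ hP h0 hs n

theorem SatACA0.univ_mem (h : SatACA0 S 𝔛) {B : Set M} (hB : B ∈ 𝔛) : Set.univ ∈ 𝔛 := by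
  have := h.2.2 (.eq .zero .zero) 0 trivial (fun _ => S.zero) (fun _ => B) (fun _ => hB)
  simpa [Sat] using this

/-- Pairs exist: `s (s + 1)` is even for every `s`, by induction. -/
theorem SatACA0.pair_total (h : SatACA0 S 𝔛) {B : Set M} (hB : B ∈ 𝔛) (a b : M) :
    ∃ p, S.PairRel p a b := by
  have hmem := h.2.2 (.ex 1 (.eq (.mul (.add .one .one) (.var 1))
    (.mul (.var 0) (.add (.var 0) .one)))) 0 (by simp [arith_ex, Fml.IsArith])
    (fun _ => S.zero) (fun _ => B) (fun _ => hB)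
  simp only [sat_ex, Sat, PTerm.val] at hmem
  simp [Function.update] at hmem
  let := h.1.commSemiring
  have h1 : ∀ s : M, ∃ t, (1 + 1) * t = s * (s + 1) := by
    intro s
    refine h.induct (P := fun s : M => ∃ t, (1 + 1) * t = s * (s + 1)) hmem
      ⟨0, by change (1 + 1) * (0 : M) = 0 * (0 + 1); ring⟩ ?_ s
    rintro n ⟨t, ht⟩
    refine ⟨t + n + 1, ?_⟩
    change (1 + 1) * (t + n + 1) = (n + 1) * (n + 1 + 1)
    calc (1 + 1) * (t + n + 1) = (1 + 1) * t + ((1 + 1) * n + (1 + 1)) := by ring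
      _ = _ := by rw [ht]; ring
  obtain ⟨t, ht⟩ := h1 (a + b)
  refine ⟨t + a, ?_⟩
  change (1 + 1) * (t + a) = (a + b) * (a + b + 1) + (1 + 1) * a
  rw [← ht]; ring

/-- Arithmetical comprehension for binary relations. The variables `0` and `1` of `φ` are the
arguments, `2` is used for the pair, and the variables above `2` carry the number parameters. -/
theorem SatACA0.rel (h : SatACA0 S 𝔛) {φ : Fml} (hφ : φ.IsArith) {A B C : Set M} (hA : A ∈ 𝔛)
    (hB : B ∈ 𝔛) (hC : C ∈ 𝔛) {R : M → M → Prop} (v₀ : ℕ → M)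
    (hR : ∀ v : ℕ → M, (∀ i, 2 < i → v i = v₀ i) →
      (Sat S 𝔛 v (params A B C) φ ↔ R (v 0) (v 1))) :
    ∃ G ∈ 𝔛, ∀ a b, b ∈ S.SliceAt G a ↔ R a b := by
  have hmem := h.2.2 (.ex 0 (.ex 1 (.and (pairF (.var 2) (.var 0) (.var 1)) φ))) 2
    (by simp [arith_ex, arith_and, arith_pairF, hφ]) v₀ _ (params_mem hA hB hC)
  refine ⟨_, hmem, fun a b => ?_⟩
  have hsat : ∀ p x y : M, Sat S 𝔛
      (Function.update (Function.update (Function.update v₀ 2 p) 0 x) 1 y) (params A B C) φ ↔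
      R x y := by
    intro p x y
    rw [hR]
    · simp
    · intro i hi
      rw [Function.update_of_ne (by omega), Function.update_of_ne (by omega),
        Function.update_of_ne (by omega)]
  simp only [AStr.SliceAt, Set.mem_ofPred_eq, sat_ex, sat_and, sat_pairF, hsat]
  simp only [PTerm.val]
  simp only [Function.update, eq_rec_constant, dite_eq_ite]
  simp
  constructor
  · rintro ⟨p, hp, x, y, hp', hr⟩
    obtain ⟨rfl, rfl⟩ := h.1.pair_inj hp hp'
    exact hr
  · intro hr
    obtain ⟨p, hp⟩ := h.pair_total hA a b
    exact ⟨p, hp, a, b, hp, hr⟩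

/-- A function with an arithmetically definable graph is coded in `𝔛`. -/
theorem SatACA0.coded (h : SatACA0 S 𝔛) {φ : Fml} (hφ : φ.IsArith) {A B C : Set M} (hA : A ∈ 𝔛)
    (hB : B ∈ 𝔛) (hC : C ∈ 𝔛) {f : M → M} (v₀ : ℕ → M)
    (hR : ∀ v : ℕ → M, (∀ i, 2 < i → v i = v₀ i) →
      (Sat S 𝔛 v (params A B C) φ ↔ f (v 0) = v 1)) :
    S.CodedFun 𝔛 f := by
  obtain ⟨G, hG, h1⟩ := h.rel hφ hA hB hC (R := fun a b => f a = b) v₀ hR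
  exact ⟨G, hG, fun a b => (h1 a b).symm⟩

/-- Definable choice: a relation coded in `𝔛` that is total has a uniformization coded in `𝔛`,
taking least values. -/
theorem SatACA0.choice (h : SatACA0 S 𝔛) {G : Set M} (hG : G ∈ 𝔛)
    (htot : ∀ a, ∃ b, b ∈ S.SliceAt G a) :
    ∃ f, S.CodedFun 𝔛 f ∧ ∀ a, f a ∈ S.SliceAt G a := by
  have hleast : ∀ a, ∃ b, b ∈ S.SliceAt G a ∧ ∀ c, S.lt c b → c ∉ S.SliceAt G a := by
    intro a
    by_contra! hno
    have hmem := h.2.2 (.all 1 (.imp (.lt (.var 1) (.var 0)) (.not (grF 0 2 1)))) 0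
      (by simp [Fml.IsArith, arith_grF]) (fun _ => a) _ (params_mem hG hG hG)
    simp [Sat, sat_grF, PTerm.val, params] at hmem
    obtain ⟨b, hb⟩ := htot a
    have key := h.induct (P := fun n => ∀ c, S.lt c n → c ∉ S.SliceAt G a) hmem
      (fun c hc => absurd hc (h.1.not_lt_zero c)) (by
        intro n hn c hc hcG
        rcases h.1.lt_succ.1 hc with h1 | rfl
        · exact hn c h1 hcG
        · obtain ⟨d, hd, hd'⟩ := hno c hcG
          exact hn d hd hd')
    exact key (S.add b S.one) b (h.1.lt_succ.2 (Or.inr rfl)) hb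
  choose f hf hfl using hleast
  refine ⟨f, ?_, hf⟩
  refine h.coded (φ := .and (grF 0 0 1)
      (.all 3 (.imp (.lt (.var 3) (.var 1)) (.not (grF 0 0 3)))))
    (by simp [Fml.IsArith, arith_and, arith_grF]) hG hG hG (fun _ => S.zero) ?_
  intro v _
  simp [Sat, sat_and, sat_grF, PTerm.val, params]
  constructor
  · rintro ⟨h1, h2⟩
    rcases h.1.2.2.2.2.2.2.2.2.2.2.1 (f (v 0)) (v 1) with h3 | h3 | h3
    · exact absurd (hf _) (h2 _ h3)
    · exact h3
    · exact absurd h1 (hfl _ _ h3)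
  · rintro h1
    rw [← h1]
    exact ⟨hf _, hfl _⟩

end Comprehension

/-! ### `β`-codes for initial parts of sets in `𝔛` -/

section BetaCode

variable {M : Type} {S : AStr M} {𝔛 : Set (Set M)}

/-- Every initial part of a set in `𝔛` has a `β`-code in `M`: inside `M` take `b > 0` divisible by
`1, …, n`, so that the moduli `1 + (x + 1) b`, `x < n`, are pairwise coprime, and run the Chinese
remainder recursion. Both steps are inductions on arithmetical conditions. -/
theorem SatACA0.code_exists (h : SatACA0 S 𝔛) {X : Set M} (hX : X ∈ 𝔛) (n : M) :
    ∃ c, (∃ a b, S.PairRel c a b) ∧ ∀ x, S.lt x n → (S.MemRel x c ↔ x ∈ X) := by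
  let _ := h.1.commSemiring
  let _ := h.1.linearOrder
  have _ := h.1.strictOrdered
  have hz := h.1.nonneg
  have hd := h.1.sub
  obtain ⟨b, hb, hdiv⟩ : ∃ b : M, 0 < b ∧ ∀ i, i < n → ∃ e, b = (i + 1) * e := by
    have hmem := h.2.2 (.ex 1 (.and (.lt .zero (.var 1)) (.all 2 (.imp (.lt (.var 2) (.var 0))
      (.ex 3 (.eq (.var 1) (.mul (.add (.var 2) .one) (.var 3)))))))) 0
      (by simp [arith_ex, arith_and, Fml.IsArith]) (fun _ => S.zero) _ (params_mem hX hX hX)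
    simp only [sat_ex, sat_and, Sat] at hmem
    refine h.induct (P := fun n : M => ∃ b : M, 0 < b ∧ ∀ i, i < n → ∃ e, b = (i + 1) * e)
      hmem ⟨1, zero_lt_one, fun i hi => absurd hi (h.1.not_lt_zero i)⟩ ?_ n
    rintro n ⟨b, hb, hdiv⟩
    refine ⟨b * (n + 1), mul_pos hb (add_pos_of_nonneg_of_pos (hz n) zero_lt_one), ?_⟩
    intro i hi
    rcases h.1.lt_succ.1 hi with h1 | rfl
    · obtain ⟨e, rfl⟩ := hdiv i h1
      exact ⟨e * (n + 1), by ring⟩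
    · exact ⟨b, mul_comm _ _⟩
  have hcrt : ∀ k, ¬ n < k → CrtInv X n b k := by
    intro k
    let m : PTerm := .add .one (.mul (.add (.var 3) .one) (.var 5))
    have hmem := h.2.2 (.imp (.not (.lt (.var 4) (.var 0))) (.ex 1 (.ex 2 (.and
      (.all 3 (.imp (.lt (.var 3) (.var 0)) (.and
        (.imp (.mem (.var 3) 0) (.ex 6 (.eq (.var 1) (.add (.mul (.var 6) m) .one))))
        (.imp (.not (.mem (.var 3) 0)) (.ex 6 (.eq (.var 1) (.mul (.var 6) m)))))))
      (.and
        (.all 3 (.imp (.lt (.var 3) (.var 0)) (.ex 6 (.eq (.var 2) (.mul (.var 6) m)))))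
        (.all 3 (.imp (.lt (.var 3) (.var 4)) (.imp (.not (.lt (.var 3) (.var 0)))
          (.ex 6 (.ex 7 (.eq (.mul (.var 6) (.var 2)) (.add (.mul (.var 7) m) .one)))))))))))) 0
      (by simp [arith_ex, arith_and, Fml.IsArith]) (fun i => if i = 4 then n else b) _
      (params_mem hX hX hX)
    simp only [sat_ex, sat_and, Sat] at hmem
    refine h.induct (P := fun k : M => ¬ n < k → CrtInv X n b k) hmem
      (fun _ => crt_zero hz X n b) ?_ k
    intro k hk hkn
    have hkn' : k < n := lt_of_lt_of_le (lt_add_one k) (not_lt.1 hkn)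
    exact crt_succ hz hd X hb hdiv hkn' (hk (not_lt.2 hkn'.le))
  obtain ⟨a, -, ha, -, -⟩ := hcrt n (lt_irrefl n)
  obtain ⟨c, hc⟩ := h.pair_total hX a b
  refine ⟨c, ⟨a, b, hc⟩, fun x hx => ?_⟩
  have hm : 1 < 1 + (x + 1) * b := lt_add_of_pos_right _
    (mul_pos (add_pos_of_nonneg_of_pos (hz x) zero_lt_one) hb)
  constructor
  · rintro ⟨-, a', b', hc', -, -, q, hq⟩
    obtain ⟨rfl, rfl⟩ := h.1.pair_inj hc hc'
    by_contra hxX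
    obtain ⟨q', hq'⟩ := (ha x hx).2 hxX
    exact beta_mod_unique hz hd hm (hq'.symm.trans hq)
  · intro hxX
    obtain ⟨e, he⟩ := hdiv x hx
    obtain ⟨q, hq⟩ := (ha x hx).1 hxX
    exact ⟨pair_large hz hd hb he hc, a, b, hc, hm, hm, q, hq⟩

end BetaCode

/-! ### Addition in models of `PA` -/

section PeanoModel

variable {K : Type} {S : AStr K} {T : Set Fml}

theorem satFO_of_foldr {φ : Fml} (l : List ℕ) {v : ℕ → K}
    (h : SatFO S v (l.foldr Fml.all φ)) : SatFO S v φ := by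
  induction l with
  | nil => exact h
  | cons x l ih =>
    refine ih ?_
    have h1 := h (v x)
    rwa [Function.update_eq_self] at h1

/-- The induction axiom for a first-order `φ`, with the parameters given by `v`. -/
theorem ModelsT.ind (hS : ModelsT S T) (hT : PAax ⊆ T) {φ : Fml} (hφ : φ.IsFO) (x : ℕ)
    (v : ℕ → K) : SatFO S v (indFml φ x) :=
  satFO_of_foldr _ (hS _ (hT (Or.inr ⟨φ, x, hφ, rfl⟩)) v)

theorem ModelsT.add_zero' (hS : ModelsT S T) (hT : PAax ⊆ T) (a : K) : S.add a S.zero = a :=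
  hS (Fml.all 0 (.eq (.add (.var 0) .zero) (.var 0))) (hT (by simp [PAax])) (fun _ => a) a

theorem ModelsT.add_succ' (hS : ModelsT S T) (hT : PAax ⊆ T) (a b : K) :
    S.add a (S.add b S.one) = S.add (S.add a b) S.one :=
  hS (Fml.all 0 (.all 1 (.eq (.add (.var 0) (.add (.var 1) .one))
     (.add (.add (.var 0) (.var 1)) .one)))) (hT (by simp [PAax])) (fun _ => a) a b

theorem ModelsT.mul_succ' (hS : ModelsT S T) (hT : PAax ⊆ T) (a b : K) :
    S.mul a (S.add b S.one) = S.add (S.mul a b) a :=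
  hS (Fml.all 0 (.all 1 (.eq (.mul (.var 0) (.add (.var 1) .one))
     (.add (.mul (.var 0) (.var 1)) (.var 0))))) (hT (by simp [PAax])) (fun _ => a) a b

theorem ModelsT.lt_iff' (hS : ModelsT S T) (hT : PAax ⊆ T) (a b : K) :
    S.lt a b ↔ ∃ c, S.add a (S.add c S.one) = b := by
  have h := hS (Fml.all 0 (.all 1 (Fml.iff (.lt (.var 0) (.var 1))
     (Fml.ex 2 (.eq (.add (.var 0) (.add (.var 2) .one)) (.var 1))))))
     (hT (by simp [PAax])) (fun _ => a) a b
  simp only [Fml.iff, sat_and, Sat, sat_ex] at h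
  exact ⟨h.1, h.2⟩

theorem ModelsT.zero_or_succ (hS : ModelsT S T) (hT : PAax ⊆ T) (a : K) :
    a = S.zero ∨ ∃ b, a = S.add b S.one := by
  have h := hS.ind hT (φ := .or (.eq (.var 0) .zero) (.ex 1 (.eq (.var 0) (.add (.var 1) .one))))
    (by simp [Fml.or, Fml.ex, Fml.IsFO]) 0 (fun _ => a)
  simp [SatFO, indFml, Fml.or, Fml.ex, Fml.substN, PTerm.subst, Sat, sat_and, PTerm.val] at h
  by_cases h0 : a = S.zero
  · exact Or.inl h0
  · exact Or.inr (h (fun c _ _ => ⟨c, rfl⟩) a h0)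

theorem ModelsT.zero_add' (hS : ModelsT S T) (hT : PAax ⊆ T) (a : K) : S.add S.zero a = a := by
  have h := hS.ind hT (φ := .eq (.add .zero (.var 0)) (.var 0)) trivial 0 (fun _ => a)
  simp [SatFO, indFml, Fml.substN, PTerm.subst, Sat, sat_and, PTerm.val] at h
  refine h (hS.add_zero' hT _) (fun b hb => ?_) a
  rw [hS.add_succ' hT, hb]

theorem ModelsT.succ_add' (hS : ModelsT S T) (hT : PAax ⊆ T) (b a : K) :
    S.add (S.add b S.one) a = S.add (S.add b a) S.one := by
  have h := hS.ind hT (φ := .eq (.add (.add (.var 1) .one) (.var 0))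
    (.add (.add (.var 1) (.var 0)) .one)) trivial 0 (fun _ => b)
  simp [SatFO, indFml, Fml.substN, PTerm.subst, Sat, sat_and, PTerm.val] at h
  refine h ?_ (fun c hc => ?_) a
  · rw [hS.add_zero' hT, hS.add_zero' hT]
  · rw [hS.add_succ' hT, hS.add_succ' hT, hc]

theorem ModelsT.add_comm' (hS : ModelsT S T) (hT : PAax ⊆ T) (b a : K) :
    S.add b a = S.add a b := by
  have h := hS.ind hT (φ := .eq (.add (.var 1) (.var 0)) (.add (.var 0) (.var 1)))
    trivial 0 (fun _ => b)
  simp [SatFO, indFml, Fml.substN, PTerm.subst, Sat, sat_and, PTerm.val] at h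
  refine h ?_ (fun c hc => ?_) a
  · rw [hS.add_zero' hT, hS.zero_add' hT]
  · rw [hS.add_succ' hT, hS.succ_add' hT, hc]

end PeanoModel

/-! ### Invariance of first-order satisfaction under isomorphism -/

section Isomorphism

variable {K M : Type} {SK : AStr K} {S : AStr M} {e : K → M}

theorem val_iso (h0 : e SK.zero = S.zero) (h1 : e SK.one = S.one)
    (hadd : ∀ a b, e (SK.add a b) = S.add (e a) (e b))
    (hmul : ∀ a b, e (SK.mul a b) = S.mul (e a) (e b)) (v : ℕ → K) (t : PTerm) :
    e (t.val SK v) = t.val S (e ∘ v) := by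
  induction t with
  | var n => rfl
  | zero => exact h0
  | one => exact h1
  | add t u iht ihu => simp [PTerm.val, hadd, iht, ihu]
  | mul t u iht ihu => simp [PTerm.val, hmul, iht, ihu]

theorem satFO_iso (hbij : Function.Bijective e) (h0 : e SK.zero = S.zero) (h1 : e SK.one = S.one)
    (hadd : ∀ a b, e (SK.add a b) = S.add (e a) (e b))
    (hmul : ∀ a b, e (SK.mul a b) = S.mul (e a) (e b))
    (hlt : ∀ a b, SK.lt a b ↔ S.lt (e a) (e b)) {φ : Fml} (hφ : φ.IsFO) (v : ℕ → K) :
    SatFO SK v φ ↔ SatFO S (e ∘ v) φ := by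
  unfold SatFO
  induction φ generalizing v with
  | eq t u =>
    simp only [Sat, ← val_iso h0 h1 hadd hmul]
    exact hbij.1.eq_iff.symm
  | lt t u => simp only [Sat, ← val_iso h0 h1 hadd hmul, hlt]
  | mem t k => exact hφ.elim
  | not φ ih => simp only [Sat, ih hφ]
  | imp φ ψ ih1 ih2 => simp only [Sat, ih1 hφ.1, ih2 hφ.2]
  | all x φ ih =>
    simp only [Sat, ih hφ, Function.comp_update]
    exact ⟨fun h a => by obtain ⟨b, rfl⟩ := hbij.2 a; exact h b, fun h a => h (e a)⟩
  | allS k φ ih => exact hφ.elim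

end Isomorphism

/-! ### Functions coded in `𝔛` -/

section CodedOps

variable {M : Type} {S : AStr M} {𝔛 : Set (Set M)}

/-- The formula `(s)_i = x`, for `s` the variable `10` and `x` the variable `k`. -/
def seqAtF (i k : ℕ) : Fml :=
  .ex 20 (.ex 21 (.and (pairF (.var 10) (.var 20) (.var 21)) (.and (.lt (numeral i) (.var 21))
    (.ex 22 (.ex 23 (.and (pairF (.var 20) (.var 22) (.var 23)) (.and
      (.lt (.var k) (.add .one (.mul (.add (numeral i) .one) (.var 23))))
      (.ex 24 (.eq (.var 22) (.add (.mul (.var 24)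
        (.add .one (.mul (.add (numeral i) .one) (.var 23)))) (.var k)))))))))))

theorem sat_seqAtF {v : ℕ → M} {w : ℕ → Set M} {i k : ℕ} (hk : k < 20) :
    Sat S 𝔛 v w (seqAtF i k) ↔ S.SeqAt (v 10) (S.num i) (v k) := by
  simp only [seqAtF, sat_ex, sat_and, sat_pairF, Sat, PTerm.val, numeral_val]
  simp [AStr.SeqAt, AStr.BetaRel, AStr.ModRel,
    show k ≠ 20 by omega, show k ≠ 21 by omega, show k ≠ 22 by omega, show k ≠ 23 by omega,
    show k ≠ 24 by omega]

/-- For `e` the code of `φ`, the formula saying that the elementary diagram (the set parameter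
`2`) contains `φ` evaluated at the variables `4`, `5`, `1`. -/
def diagF (e : ℕ) : Fml :=
  .ex 10 (.ex 11 (.and (.ex 12 (pairF (.var 10) (.var 12) (numeral 3)))
    (.and (.and (seqAtF 0 4) (.and (seqAtF 1 5) (seqAtF 2 1)))
      (.and (pairF (.var 11) (numeral e) (.var 10)) (.mem (.var 11) 2)))))

theorem sat_diagF {v : ℕ → M} {w : ℕ → Set M} {e : ℕ} :
    Sat S 𝔛 v w (diagF e) ↔ ∃ s p, S.SeqLen s (S.num 3) ∧
      (S.SeqAt s (S.num 0) (v 4) ∧ S.SeqAt s (S.num 1) (v 5) ∧ S.SeqAt s (S.num 2) (v 1)) ∧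
      S.PairRel p (S.num e) s ∧ p ∈ w 2 := by
  simp only [diagF, sat_ex, sat_and, sat_pairF, Sat, PTerm.val, numeral_val,
    sat_seqAtF (show 4 < 20 by decide), sat_seqAtF (show 5 < 20 by decide),
    sat_seqAtF (show 1 < 20 by decide)]
  simp [AStr.SeqLen]

theorem arith_diagF {e : ℕ} : (diagF e).IsArith := by
  simp [diagF, seqAtF, arith_ex, arith_and, arith_pairF, Fml.IsArith]

/-- A binary operation of `K₀` with first-order definable graph is defined in `(M, 𝔛)` by the
arithmetical formula `diagF`, with the elementary diagram `C` as set parameter. -/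
theorem diag_op {K0 : AStr M} {C : Set M}
    (hdiag : ∀ (φ : Fml) (l : ℕ) (v : ℕ → M), Fml.IsFO φ → φ.freeN ⊆ Finset.range l →
      (SatFO K0 v φ ↔ ∃ s p, S.SeqLen s (S.num l) ∧ (∀ i < l, S.SeqAt s (S.num i) (v i)) ∧
        S.PairRel p (S.num (Fml.code φ)) s ∧ p ∈ C))
    {φ : Fml} (hφ : φ.IsFO) (hfree : φ.freeN ⊆ Finset.range 3) {op : M → M → M}
    (hop : ∀ v, SatFO K0 v φ ↔ op (v 0) (v 1) = v 2) (v : ℕ → M) (A B : Set M) :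
    Sat S 𝔛 v (params A B C) (diagF φ.code) ↔ op (v 4) (v 5) = v 1 := by
  have h := hdiag φ 3 (fun i => if i = 0 then v 4 else if i = 1 then v 5 else v 1) hφ hfree
  rw [hop] at h
  rw [sat_diagF]
  refine Iff.trans ?_ h.symm
  refine exists_congr fun s => exists_congr fun p => and_congr_right fun _ =>
    and_congr_left fun _ => ?_
  constructor
  · rintro ⟨h0, h1, h2⟩ i hi
    interval_cases i
    · exact h0
    · exact h1
    · exact h2
  · intro h
    exact ⟨h 0 (by decide), h 1 (by decide), h 2 (by decide)⟩

/-- Coded functions are closed under any binary operation whose graph is defined by an arithmetical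
formula `ψ`, the variables `4`, `5` standing for the arguments and `1` for the value. -/
theorem SatACA0.coded_op (h : SatACA0 S 𝔛) {C : Set M} (hC : C ∈ 𝔛) {ψ : Fml}
    (hψ : ψ.IsArith) {op : M → M → M}
    (hop : ∀ (v : ℕ → M) (A B : Set M), Sat S 𝔛 v (params A B C) ψ ↔ op (v 4) (v 5) = v 1)
    {f g : M → M} (hf : S.CodedFun 𝔛 f) (hg : S.CodedFun 𝔛 g) :
    S.CodedFun 𝔛 (fun a => op (f a) (g a)) := by
  obtain ⟨F, hF, hfF⟩ := hf
  obtain ⟨G, hG, hgG⟩ := hg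
  refine h.coded (φ := .ex 4 (.ex 5 (.and (.and (grF 0 0 4) (grF 1 0 5)) ψ)))
    (by simp [arith_ex, arith_and, arith_grF, hψ]) hF hG hC (fun _ => S.zero) ?_
  intro v _
  simp [sat_ex, sat_and, sat_grF, hop, params, ← hfF, ← hgG]

theorem SatACA0.coded_comp (h : SatACA0 S 𝔛) {f g : M → M} (hf : S.CodedFun 𝔛 f)
    (hg : S.CodedFun 𝔛 g) : S.CodedFun 𝔛 (fun a => f (g a)) := by
  obtain ⟨F, hF, hfF⟩ := hf
  obtain ⟨G, hG, hgG⟩ := hg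
  refine h.coded (φ := .ex 4 (.and (grF 1 0 4) (grF 0 4 1)))
    (by simp [arith_ex, arith_and, arith_grF]) hF hG hG (fun _ => S.zero) ?_
  intro v _
  simp [sat_ex, sat_and, sat_grF, params, ← hfF, ← hgG]

theorem SatACA0.coded_const (h : SatACA0 S 𝔛) {B : Set M} (hB : B ∈ 𝔛) (c : M) :
    S.CodedFun 𝔛 (fun _ => c) := by
  refine h.coded (φ := .eq (.var 3) (.var 1)) trivial hB hB hB (fun _ => c) ?_
  intro v hv
  simp [Sat, PTerm.val, hv 3 (by decide)]

theorem SatACA0.eq_mem (h : SatACA0 S 𝔛) {f g : M → M} (hf : S.CodedFun 𝔛 f)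
    (hg : S.CodedFun 𝔛 g) : {a | f a = g a} ∈ 𝔛 := by
  obtain ⟨F, hF, hfF⟩ := hf
  obtain ⟨G, hG, hgG⟩ := hg
  have hmem := h.2.2 (.ex 4 (.and (grF 0 0 4) (grF 1 0 4))) 0
    (by simp [arith_ex, arith_and, arith_grF]) (fun _ => S.zero) _ (params_mem hF hG hG)
  simpa [sat_ex, sat_and, sat_grF, params, ← hfF, ← hgG, eq_comm] using hmem

theorem SatACA0.lt_mem (h : SatACA0 S 𝔛) {f g : M → M} (hf : S.CodedFun 𝔛 f)
    (hg : S.CodedFun 𝔛 g) : {a | S.lt (f a) (g a)} ∈ 𝔛 := by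
  obtain ⟨F, hF, hfF⟩ := hf
  obtain ⟨G, hG, hgG⟩ := hg
  have hmem := h.2.2 (.ex 4 (.ex 5 (.and (.and (grF 0 0 4) (grF 1 0 5))
      (.lt (.var 4) (.var 5))))) 0
    (by simp [arith_ex, arith_and, arith_grF, Fml.IsArith]) (fun _ => S.zero) _
    (params_mem hF hG hG)
  simpa [Sat, PTerm.val, sat_ex, sat_and, sat_grF, params, ← hfF, ← hgG] using hmem

theorem SatACA0.coded_id (h : SatACA0 S 𝔛) {B : Set M} (hB : B ∈ 𝔛) :
    S.CodedFun 𝔛 (fun a => a) := by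
  refine h.coded (φ := .eq (.var 0) (.var 1)) trivial hB hB hB (fun _ => S.zero) ?_
  intro v hv
  simp [Sat, PTerm.val]

/-- A complete filter on `P_𝔛` contains every final segment of `M`: the indicator function of
`{x | a < x}` is constant on some unbounded set of the filter, necessarily with value `1`. -/
theorem SatACA0.final_mem (h : SatACA0 S 𝔛) {B : Set M} (hB : B ∈ 𝔛) {U : Set (Set M)}
    (hU : IsFilterOn (S.PX 𝔛) U) (hcompl : S.CompleteOn 𝔛 U) {X : Set M} (hX : X ∈ 𝔛) {a : M}
    (ha : ∀ x, S.lt a x → x ∈ X) : X ∈ U := by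
  classical
  have h01 : S.lt S.zero S.one := h.1.2.2.2.2.2.2.2.2.2.2.2.2.2.2.1
  obtain ⟨D, hD, hconst⟩ := hcompl (fun x => if S.lt a x then S.one else S.zero) (by
      refine h.coded (φ := .and (.imp (.lt (.var 3) (.var 0)) (.eq .one (.var 1)))
        (.imp (.not (.lt (.var 3) (.var 0))) (.eq .zero (.var 1))))
        (by simp [arith_and, Fml.IsArith]) hB hB hB (fun _ => a) ?_
      intro v hv
      simp only [Sat, sat_and, PTerm.val, hv 3 (by decide)]
      by_cases hav : S.lt a (v 0) <;> simp [hav])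
    ⟨S.add S.one S.one, fun x => by
      rw [h.1.lt_succ]
      by_cases hax : S.lt a x <;> simp [hax, h01]⟩
  have hDP := hU.1 hD
  have hDX : D ⊆ X := by
    obtain ⟨d, hd, had⟩ := hDP.2 a
    intro x hx
    have h1 := hconst x hx d hd
    simp only [had, if_true] at h1
    by_contra hxX
    have h2 : ¬ S.lt a x := fun hax => hxX (ha x hax)
    simp only [h2, if_false] at h1
    exact h.1.2.2.2.2.2.2.2.2.2.1 S.zero (by rw [← h1] at h01; exact h01)
  exact hU.2.2.2.1 D hD X ⟨hX, fun b => let ⟨d, hd, hbd⟩ := hDP.2 b; ⟨d, hDX hd, hbd⟩⟩ hDX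

/-- Uniformly in `n`, the initial part `B ∩ [0, n)` of `B ∈ 𝔛` is coded by `c n = ⟨α n, β n⟩`,
with `c`, `α`, `β` coded in `𝔛`. -/
theorem SatACA0.exists_codes (h : SatACA0 S 𝔛) {B : Set M} (hB : B ∈ 𝔛) :
    ∃ c α β : M → M, S.CodedFun 𝔛 c ∧ S.CodedFun 𝔛 α ∧ S.CodedFun 𝔛 β ∧
      (∀ n, S.PairRel (c n) (α n) (β n)) ∧
      ∀ n x, S.lt x n → (S.MemRel x (c n) ↔ x ∈ B) := by
  let m : PTerm := .add .one (.mul (.add (.var 3) .one) (.var 5))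
  let memF : Fml := .and (.lt (.var 3) (.var 1)) (.ex 4 (.ex 5
    (.and (pairF (.var 1) (.var 4) (.var 5)) (.and (.lt .one m) (.and (.lt .one m)
      (.ex 6 (.eq (.var 4) (.add (.mul (.var 6) m) .one))))))))
  obtain ⟨G, hG, hGR⟩ := h.rel (φ := .and (.ex 4 (.ex 5 (pairF (.var 1) (.var 4) (.var 5))))
      (.all 3 (.imp (.lt (.var 3) (.var 0))
        (.and (.imp memF (.mem (.var 3) 0)) (.imp (.mem (.var 3) 0) memF)))))
    (by simp [memF, arith_ex, arith_and, arith_pairF, Fml.IsArith]) hB hB hB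
    (R := fun n z => (∃ a b, S.PairRel z a b) ∧ ∀ x, S.lt x n → (S.MemRel x z ↔ x ∈ B))
    (fun _ => S.zero) (by
      intro v _
      simp [memF, m, sat_ex, sat_and, sat_pairF, Sat, PTerm.val, AStr.MemRel, AStr.ModRel,
        params, iff_iff_implies_and_implies])
  obtain ⟨c, hc, hcG⟩ := h.choice hG (fun n => by
    obtain ⟨z, hz⟩ := h.code_exists hB n
    exact ⟨z, (hGR n z).2 hz⟩)
  have hcR := fun n => (hGR n _).1 (hcG n)
  obtain ⟨F, hF, hcF⟩ := id hc
  obtain ⟨G1, hG1, hGR1⟩ := h.rel (φ := .ex 3 (.ex 4 (.and (grF 0 0 3)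
      (pairF (.var 3) (.var 1) (.var 4)))))
    (by simp [arith_ex, arith_and, arith_pairF, arith_grF]) hF hB hB
    (R := fun n z => ∃ b, S.PairRel (c n) z b) (fun _ => S.zero) (by
      intro v _
      simp [sat_ex, sat_and, sat_pairF, sat_grF, PTerm.val, params, ← hcF])
  obtain ⟨α, hα, hαG⟩ := h.choice hG1 (fun n => by
    obtain ⟨a, b, hab⟩ := (hcR n).1
    exact ⟨a, (hGR1 n a).2 ⟨b, hab⟩⟩)
  obtain ⟨F', hF', hαF⟩ := id hα
  obtain ⟨G2, hG2, hGR2⟩ := h.rel (φ := .ex 3 (.ex 4 (.and (.and (grF 0 0 3) (grF 1 0 4))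
      (pairF (.var 3) (.var 4) (.var 1)))))
    (by simp [arith_ex, arith_and, arith_pairF, arith_grF]) hF hF' hB
    (R := fun n z => S.PairRel (c n) (α n) z) (fun _ => S.zero) (by
      intro v _
      simp [sat_ex, sat_and, sat_pairF, sat_grF, PTerm.val, params, ← hcF, ← hαF])
  obtain ⟨β, hβ, hβG⟩ := h.choice hG2 (fun n => by
    obtain ⟨b, hb⟩ := (hGR1 n _).1 (hαG n)
    exact ⟨b, (hGR2 n b).2 hb⟩)
  exact ⟨c, α, β, hc, hα, hβ, fun n => (hGR2 n _).1 (hβG n), fun n => (hcR n).2⟩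

/-- The quotients witnessing `β(c n, a) = 1` can be chosen by a function coded in `𝔛`. -/
theorem SatACA0.exists_quotient (h : SatACA0 S 𝔛) {α β : M → M} (hα : S.CodedFun 𝔛 α)
    (hβ : S.CodedFun 𝔛 β) (a : M)
    (hq : ∀ n, S.lt a n → ∃ q, α n =
      S.add (S.mul q (S.add S.one (S.mul (S.add a S.one) (β n)))) S.one) :
    ∃ q, S.CodedFun 𝔛 q ∧ ∀ n, S.lt a n → α n =
      S.add (S.mul (q n) (S.add S.one (S.mul (S.add a S.one) (β n)))) S.one := by
  obtain ⟨F, hF, hαF⟩ := hα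
  obtain ⟨F', hF', hβF⟩ := hβ
  obtain ⟨G, hG, hGR⟩ := h.rel (φ := .imp (.lt (.var 3) (.var 0)) (.ex 4 (.ex 5
      (.and (.and (grF 0 0 4) (grF 1 0 5)) (.eq (.var 4) (.add (.mul (.var 1)
        (.add .one (.mul (.add (.var 3) .one) (.var 5)))) .one))))))
    (by simp [arith_ex, arith_and, arith_grF, Fml.IsArith]) hF hF' hF'
    (R := fun n z => S.lt a n → α n =
      S.add (S.mul z (S.add S.one (S.mul (S.add a S.one) (β n)))) S.one) (fun _ => a) (by
      intro v hv
      have hv3 := hv 3 (by decide)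
      simp [sat_ex, sat_and, sat_grF, Sat, PTerm.val, params, ← hαF, ← hβF, hv3])
  obtain ⟨q, hq', hqG⟩ := h.choice hG (fun n => by
    by_cases han : S.lt a n
    · obtain ⟨z, hz⟩ := hq n han
      exact ⟨z, (hGR n z).2 fun _ => hz⟩
    · exact ⟨S.zero, (hGR n _).2 fun h' => absurd h' han⟩)
  exact ⟨q, hq', fun n => (hGR n _).1 (hqG n)⟩

end CodedOps

/-! ### Absoluteness of the coding formula for the initial segment `M ⊆ K` -/

section InitialSegment

variable {M K : Type} {S : AStr M} {SK : AStr K} {T : Set Fml} {j : M → K}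

/-- Both summands of an element of the initial segment `j(M)` lie in `j(M)`. -/
theorem range_of_add (hK : ModelsT SK T) (hPA : PAax ⊆ T)
    (hinit : ∀ (x : K) (a : M), SK.lt x (j a) → ∃ b : M, j b = x) {x y : K} {p : M}
    (h : SK.add x y = j p) : (∃ a, j a = x) ∧ ∃ b, j b = y := by
  have key : ∀ x y, SK.add x y = j p → ∃ a, j a = x := by
    intro x y h
    rcases hK.zero_or_succ hPA y with rfl | ⟨z, rfl⟩
    · exact ⟨p, by rw [← h, hK.add_zero' hPA]⟩
    · exact hinit x p ((hK.lt_iff' hPA _ _).2 ⟨z, h⟩)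
  exact ⟨key x y h, key y x (by rw [hK.add_comm' hPA, h])⟩

/-- Witnesses in `K` for `j a ∈ j c` lie in the initial segment `j(M)`, so `a ∈ c` holds
in `M`. -/
theorem memRel_of_initial (hK : ModelsT SK T) (hPA : PAax ⊆ T) (hinj : Function.Injective j)
    (hj1 : j S.one = SK.one)
    (hjadd : ∀ a b, j (S.add a b) = SK.add (j a) (j b))
    (hjmul : ∀ a b, j (S.mul a b) = SK.mul (j a) (j b))
    (hjlt : ∀ a b, S.lt a b ↔ SK.lt (j a) (j b))
    (hinit : ∀ (x : K) (a : M), SK.lt x (j a) → ∃ b : M, j b = x) {a c : M}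
    (h : SK.MemRel (j a) (j c)) : S.MemRel a c := by
  obtain ⟨hlt, x, y, hp, h1, h2, q, hq⟩ := h
  have htwo : j S.two = SK.two := by rw [AStr.two, hjadd, hj1]; rfl
  have hpair := hp
  unfold AStr.PairRel at hpair
  rw [← htwo, ← hjmul] at hpair
  -- `s (s + 1) = s s + s` lies in `j(M)` for `s = x + y`, hence so do `s`, `x` and `y`
  obtain ⟨r, hr⟩ := (range_of_add hK hPA hinit hpair.symm).1
  rw [hK.mul_succ' hPA] at hr
  obtain ⟨s, hs⟩ := (range_of_add hK hPA hinit hr.symm).2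
  obtain ⟨⟨x, rfl⟩, y, rfl⟩ := range_of_add hK hPA hinit hs.symm
  obtain ⟨t, ht⟩ := (range_of_add hK hPA hinit hq.symm).1
  have ht' := ht
  rw [hK.add_comm' hPA SK.one, hK.mul_succ' hPA] at ht'
  obtain ⟨q, rfl⟩ := (range_of_add hK hPA hinit ht'.symm).2
  rw [← hj1] at h1 h2 hq
  simp only [← hjadd, ← hjmul] at h1 h2 hq
  rw [← hjlt] at hlt h1 h2
  refine ⟨hlt, x, y, ?_, h1, h2, q, hinj hq⟩
  apply hinj
  simp only [hjadd, hjmul, hj1, htwo]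
  exact hp

end InitialSegment

/-! ### Coding `𝔛` in the restricted ultrapower -/

/-- Lemma: `𝔛 ⊆ Cod(N/M)`. If `U` is a complete ultrafilter on
`P_𝔛` then every `A ∈ 𝔛` is coded in the restricted ultrapower `N = ∏_𝔛 K / U`. -/
theorem restricted_ultrapower_codes_X
    {M KT NT : Type} (S : AStr M) (𝔛 : Set (Set M)) (T : Set Fml) (A : Set M)
    (K : AStr KT) (j : M → KT) (K0 : AStr M) (C : Set M) (ϱ : KT → M)
    (U : Set (Set M)) (SN : AStr NT) (π : (M → KT) → NT)
    -- the second-order structure (M,𝔛) ⊨ ACA₀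
    (hACA : SatACA0 S 𝔛)
    -- T ⊇ PA is a theory coded in 𝔛 with M ⊨ Con_T
    (hSent : ∀ φ ∈ T, IsFOSentence φ) (hPA : PAax ⊆ T)
    (hA : A ∈ 𝔛) (hTcode : ∀ n : ℕ, (S.num n ∈ A ↔ n ∈ theoryCode T))
    (hCon : S.SatConTheory T)
    -- M ⊆_e K : j embeds M onto an initial segment of K
    (hjinj : Function.Injective j)
    (hj0 : j S.zero = K.zero) (hj1 : j S.one = K.one)
    (hjadd : ∀ a b, j (S.add a b) = K.add (j a) (j b))
    (hjmul : ∀ a b, j (S.mul a b) = K.mul (j a) (j b))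
    (hjlt : ∀ a b, S.lt a b ↔ K.lt (j a) (j b))
    (hjinit : ∀ (x : KT) (a : M), K.lt x (j a) → ∃ b : M, j b = x)
    -- K₀ ⊨ T has domain M and its elementary diagram is coded by C ∈ 𝔛
    (hK0T : ModelsT K0 T) (hC : C ∈ 𝔛)
    (hdiag : ∀ (φ : Fml) (l : ℕ) (v : ℕ → M), Fml.IsFO φ → φ.freeN ⊆ Finset.range l →
      (SatFO K0 v φ ↔ ∃ s p, S.SeqLen s (S.num l) ∧ (∀ i < l, S.SeqAt s (S.num i) (v i)) ∧
        S.PairRel p (S.num (Fml.code φ)) s ∧ p ∈ C))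
    -- ϱ : K ≅ K₀ is an isomorphism
    (hrbij : Function.Bijective ϱ)
    (hr0 : ϱ K.zero = K0.zero) (hr1 : ϱ K.one = K0.one)
    (hradd : ∀ a b, ϱ (K.add a b) = K0.add (ϱ a) (ϱ b))
    (hrmul : ∀ a b, ϱ (K.mul a b) = K0.mul (ϱ a) (ϱ b))
    (hrlt : ∀ a b, K.lt a b ↔ K0.lt (ϱ a) (ϱ b))
    -- ϱ ∘ j is the canonical embedding of M into K₀, and it is coded in 𝔛
    (hcan0 : ϱ (j S.zero) = K0.zero)
    (hcansucc : ∀ a, ϱ (j (S.add a S.one)) = K0.add (ϱ (j a)) K0.one)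
    (hcancod : S.CodedFun 𝔛 (fun a => ϱ (j a)))
    -- U is an ultrafilter on P_𝔛
    (hU : IsUltraOn (S.PX 𝔛) U)
    -- (NT, SN, π) realizes the restricted ultrapower N = ∏_𝔛 K / U :
    -- π maps ∏_𝔛 K (the functions f with ϱ ∘ f coded in 𝔛) onto N,
    -- identifying f and g exactly when they agree on a set in U
    (hsurj : ∀ n : NT, ∃ f : M → KT, S.CodedFun 𝔛 (fun a => ϱ (f a)) ∧ π f = n)
    (heq : ∀ f g : M → KT, S.CodedFun 𝔛 (fun a => ϱ (f a)) →
      S.CodedFun 𝔛 (fun a => ϱ (g a)) → (π f = π g ↔ {a : M | f a = g a} ∈ U))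
    (hzero : ∀ f : M → KT, S.CodedFun 𝔛 (fun a => ϱ (f a)) → (∀ a, f a = K.zero) →
      π f = SN.zero)
    (hone : ∀ f : M → KT, S.CodedFun 𝔛 (fun a => ϱ (f a)) → (∀ a, f a = K.one) →
      π f = SN.one)
    (hadd : ∀ f g h : M → KT, S.CodedFun 𝔛 (fun a => ϱ (f a)) →
      S.CodedFun 𝔛 (fun a => ϱ (g a)) → S.CodedFun 𝔛 (fun a => ϱ (h a)) →
      (∀ a, h a = K.add (f a) (g a)) → SN.add (π f) (π g) = π h)
    (hmul : ∀ f g h : M → KT, S.CodedFun 𝔛 (fun a => ϱ (f a)) →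
      S.CodedFun 𝔛 (fun a => ϱ (g a)) → S.CodedFun 𝔛 (fun a => ϱ (h a)) →
      (∀ a, h a = K.mul (f a) (g a)) → SN.mul (π f) (π g) = π h)
    (hlt : ∀ f g : M → KT, S.CodedFun 𝔛 (fun a => ϱ (f a)) →
      S.CodedFun 𝔛 (fun a => ϱ (g a)) →
      (SN.lt (π f) (π g) ↔ {a : M | K.lt (f a) (g a)} ∈ U))
    -- U is complete
    (hcompl : S.CompleteOn 𝔛 U) :
    ∀ B ∈ 𝔛, ∃ c : NT, ∀ a : M, (a ∈ B ↔ SN.MemRel (π (fun _ => j a)) c) := by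
  have hTK : ModelsT K T := fun φ hφ v =>
    (satFO_iso hrbij hr0 hr1 hradd hrmul hrlt (hSent φ hφ).1 v).2 (hK0T φ hφ _)
  -- `∏_𝔛 K` contains the constants and `j ∘ f` for coded `f`, and is closed under `+` and `·`
  have cconst : ∀ x : KT, S.CodedFun 𝔛 (fun _ : M => ϱ x) := fun x => hACA.coded_const hA (ϱ x)
  have cj : ∀ f : M → M, S.CodedFun 𝔛 f → S.CodedFun 𝔛 (fun n => ϱ (j (f n))) :=
    fun f hf => hACA.coded_comp hcancod hf
  have cadd : ∀ f g : M → KT, S.CodedFun 𝔛 (fun a => ϱ (f a)) → S.CodedFun 𝔛 (fun a => ϱ (g a)) →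
      S.CodedFun 𝔛 (fun a => ϱ (K.add (f a) (g a))) := by
    intro f g hf hg
    simp only [hradd]
    exact hACA.coded_op hC arith_diagF (diag_op hdiag
      (φ := .eq (.add (.var 0) (.var 1)) (.var 2)) trivial (by decide) (fun v => Iff.rfl)) hf hg
  have cmul : ∀ f g : M → KT, S.CodedFun 𝔛 (fun a => ϱ (f a)) → S.CodedFun 𝔛 (fun a => ϱ (g a)) →
      S.CodedFun 𝔛 (fun a => ϱ (K.mul (f a) (g a))) := by
    intro f g hf hg
    simp only [hrmul]
    exact hACA.coded_op hC arith_diagF (diag_op hdiag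
      (φ := .eq (.mul (.var 0) (.var 1)) (.var 2)) trivial (by decide) (fun v => Iff.rfl)) hf hg
  have sadd : ∀ f g : M → KT, S.CodedFun 𝔛 (fun a => ϱ (f a)) → S.CodedFun 𝔛 (fun a => ϱ (g a)) →
      SN.add (π f) (π g) = π (fun a => K.add (f a) (g a)) :=
    fun f g hf hg => hadd f g _ hf hg (cadd f g hf hg) fun _ => rfl
  have smul : ∀ f g : M → KT, S.CodedFun 𝔛 (fun a => ϱ (f a)) → S.CodedFun 𝔛 (fun a => ϱ (g a)) →
      SN.mul (π f) (π g) = π (fun a => K.mul (f a) (g a)) :=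
    fun f g hf hg => hmul f g _ hf hg (cmul f g hf hg) fun _ => rfl
  have sone : SN.one = π (fun _ => K.one) := (hone _ (cconst _) fun _ => rfl).symm
  have stwo : SN.two = π (fun _ => K.two) := by
    rw [AStr.two, sone, sadd _ _ (cconst _) (cconst _)]; rfl
  -- Łoś's theorem for the three atomic parts of `x ∈ y`
  have los_pair : ∀ p f g : M → KT, S.CodedFun 𝔛 (fun a => ϱ (p a)) →
      S.CodedFun 𝔛 (fun a => ϱ (f a)) → S.CodedFun 𝔛 (fun a => ϱ (g a)) →
      (SN.PairRel (π p) (π f) (π g) ↔ {n | K.PairRel (p n) (f n) (g n)} ∈ U) := by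
    intro p f g hp hf hg
    have c1 := cadd f g hf hg
    have c2 := cadd _ _ c1 (cconst K.one)
    have c3 := cmul _ _ c1 c2
    have c4 := cmul _ _ (cconst K.two) hf
    unfold AStr.PairRel
    rw [stwo, sone, smul _ _ (cconst _) hp, sadd _ _ hf hg, sadd _ _ c1 (cconst _),
      smul _ _ c1 c2, smul _ _ (cconst _) hf, sadd _ _ c3 c4,
      heq _ _ (cmul _ _ (cconst K.two) hp) (cadd _ _ c3 c4)]
  have cmod : ∀ (x : KT) (g : M → KT), S.CodedFun 𝔛 (fun a => ϱ (g a)) →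
      S.CodedFun 𝔛 (fun a => ϱ (K.add K.one (K.mul (K.add x K.one) (g a)))) := fun x g hg =>
    cadd _ _ (cconst K.one) (cmul _ _ (cconst (K.add x K.one)) hg)
  have smod : ∀ (x : KT) (g : M → KT), S.CodedFun 𝔛 (fun a => ϱ (g a)) →
      SN.add SN.one (SN.mul (SN.add (π fun _ => x) SN.one) (π g)) =
        π (fun a => K.add K.one (K.mul (K.add x K.one) (g a))) := by
    intro x g hg
    rw [sone, sadd _ _ (cconst _) (cconst _), smul _ _ (cconst (K.add x K.one)) hg,
      sadd _ _ (cconst _) (cmul _ _ (cconst (K.add x K.one)) hg)]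
  have los_lt : ∀ (x : KT) (g : M → KT), S.CodedFun 𝔛 (fun a => ϱ (g a)) →
      (SN.lt SN.one (SN.add SN.one (SN.mul (SN.add (π fun _ => x) SN.one) (π g))) ↔
        {n | K.lt K.one (K.add K.one (K.mul (K.add x K.one) (g n)))} ∈ U) := by
    intro x g hg
    rw [smod x g hg, sone, hlt _ _ (cconst _) (cmod x g hg)]
  have los_eq : ∀ (x : KT) (f g q : M → KT), S.CodedFun 𝔛 (fun a => ϱ (f a)) →
      S.CodedFun 𝔛 (fun a => ϱ (g a)) → S.CodedFun 𝔛 (fun a => ϱ (q a)) →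
      (π f = SN.add (SN.mul (π q)
          (SN.add SN.one (SN.mul (SN.add (π fun _ => x) SN.one) (π g)))) SN.one ↔
        {n | f n = K.add (K.mul (q n) (K.add K.one (K.mul (K.add x K.one) (g n)))) K.one} ∈ U) := by
    intro x f g q hf hg hq
    have c1 := cmul _ _ hq (cmod x g hg)
    rw [smod x g hg, sone, smul _ _ hq (cmod x g hg), sadd _ _ c1 (cconst _),
      heq _ _ hf (cadd _ _ c1 (cconst K.one))]
  have hfin : ∀ (a : M) (X : Set M), X ∈ 𝔛 → (∀ x, S.lt a x → x ∈ X) → X ∈ U :=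
    fun a X hX ha => hACA.final_mem hA hU.1 hcompl hX ha
  intro B hB
  obtain ⟨c, α, β, hc, hα, hβ, hpair, hcB⟩ := hACA.exists_codes hB
  refine ⟨π (fun n => j (c n)), fun a => ⟨fun haB => ?_, ?_⟩⟩
  · have hmem : ∀ n, S.lt a n → S.lt a (c n) ∧
        S.lt S.one (S.add S.one (S.mul (S.add a S.one) (β n))) ∧
        ∃ q, α n = S.add (S.mul q (S.add S.one (S.mul (S.add a S.one) (β n)))) S.one := by
      intro n han
      obtain ⟨h1, x, y, hxy, h2, -, h3⟩ := (hcB n a han).2 haB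
      obtain ⟨rfl, rfl⟩ := hACA.1.pair_inj (hpair n) hxy
      exact ⟨h1, h2, h3⟩
    obtain ⟨q, hq, hqeq⟩ := hACA.exists_quotient hα hβ a fun n han => (hmem n han).2.2
    have hcm : S.CodedFun 𝔛 (fun n => S.add S.one (S.mul (S.add a S.one) (β n))) := by
      have hmulc := hACA.coded_op hA (op := S.mul) (ψ := .eq (.mul (.var 4) (.var 5)) (.var 1))
        trivial (fun _ _ _ => Iff.rfl) (hACA.coded_const hA (S.add a S.one)) hβ
      exact hACA.coded_op hA (op := S.add) (ψ := .eq (.add (.var 4) (.var 5)) (.var 1))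
        trivial (fun _ _ _ => Iff.rfl) (hACA.coded_const hA S.one) hmulc
    have hltU : SN.lt SN.one (SN.add SN.one (SN.mul (SN.add (π fun _ => j a) SN.one)
        (π fun n => j (β n)))) := by
      rw [los_lt (j a) _ (cj β hβ)]
      refine hfin a _ ?_ fun n han => ?_
      · have h1 := hACA.lt_mem (hACA.coded_const hA S.one) hcm
        simpa only [hjlt, hj1, hjadd, hjmul] using h1
      · have h1 := (hmem n han).2.1
        simpa only [hjlt, hj1, hjadd, hjmul, Set.mem_ofPred_eq] using h1
    refine ⟨?_, π fun n => j (α n), π fun n => j (β n), ?_, hltU, hltU,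
      π fun n => j (q n), ?_⟩
    · rw [hlt _ _ (cconst _) (cj c hc)]
      refine hfin a _ ?_ fun n han => (hjlt _ _).1 (hmem n han).1
      simpa only [hjlt] using hACA.lt_mem (hACA.coded_const hA a) hc
    · rw [los_pair _ _ _ (cj c hc) (cj α hα) (cj β hβ)]
      have huniv : {n | K.PairRel (j (c n)) (j (α n)) (j (β n))} = Set.univ := by
        ext n
        have h1 := congrArg j (hpair n)
        simp only [AStr.two, hjadd, hjmul, hj1] at h1
        exact ⟨fun _ => trivial, fun _ => h1⟩
      rw [huniv]
      exact hfin a _ (hACA.univ_mem hA) fun _ _ => trivial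
    · rw [los_eq (j a) _ _ _ (cj α hα) (cj β hβ) (cj q hq)]
      refine hfin a _ ?_ fun n han => ?_
      · have h1 := hACA.eq_mem (cj α hα)
          (cadd _ _ (cmul _ _ (cj q hq) (cmod (j a) _ (cj β hβ))) (cconst K.one))
        simpa only [hrbij.1.eq_iff] using h1
      · have h1 := congrArg j (hqeq n han)
        simpa only [hj1, hjadd, hjmul, Set.mem_ofPred_eq] using h1
  · rintro ⟨h1, x, y, hp, h2, -, q, hq⟩
    obtain ⟨x, hx, rfl⟩ := hsurj x
    obtain ⟨y, hy, rfl⟩ := hsurj y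
    obtain ⟨q, hqc, rfl⟩ := hsurj q
    rw [hlt _ _ (cconst _) (cj c hc)] at h1
    rw [los_pair _ _ _ (cj c hc) hx hy] at hp
    rw [los_lt (j a) _ hy] at h2
    rw [los_eq (j a) _ _ _ hx hy hqc] at hq
    have h0 : {n | S.lt a n} ∈ U := hfin a _
      (hACA.lt_mem (hACA.coded_const hA a) (hACA.coded_id hA)) fun _ h => h
    -- a common point `n > a` at which all the conditions hold in `K`
    have hdir := hU.1.2.2.2.2
    obtain ⟨Z1, hZ1, ha1, hb1⟩ := hdir _ h0 _ h1
    obtain ⟨Z2, hZ2, ha2, hb2⟩ := hdir _ hp _ h2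
    obtain ⟨Z3, hZ3, ha3, hb3⟩ := hdir _ hZ1 _ hZ2
    obtain ⟨Z, hZ, ha4, hb4⟩ := hdir _ hZ3 _ hq
    obtain ⟨n, hn, -⟩ := (hU.1.1 hZ).2 a
    have hn1 := ha3 (ha4 hn)
    have hn2 := hb3 (ha4 hn)
    refine (hcB n a (ha1 hn1)).1 (memRel_of_initial hTK hPA hjinj hj1 hjadd hjmul hjlt hjinit ?_)
    exact ⟨hb1 hn1, x n, y n, ha2 hn2, hb2 hn2, hb2 hn2, q n, hb4 hn⟩

end Paper
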